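/- arXiv:2002.02853 — 7 statements merged into one kernel-verified Lean document; each statement's English description precedes it below -/
import Mathlib

section
/- Lemma (H_φ ∈ ℍ⁰, Lemma 3.1): There exists a constant C>0 such that for every family of complex numbers (φ̂_{m,n})_{m∈ℤ, n≥1} with ∑_{m∈ℤ, n≥1} |φ̂_{m,n}|² (m²+n²)² < ∞, one has ∑_{l,l' ∈ Λ} |ℱ_lℱ_{l'}(H_φ)|² ≤ C · ∑_{m∈ℤ, n≥1} |φ̂_{m,n}|² (m²+n²)². In particular, if φ belongs to the Sobolev space ℍ² of order 2 (weighted ℓ² condition on its Fourier coefficients with weight (m²+n²)²), then the kernel H_φ has square-summable double Fourier coefficients, i.e. H_φ ∈ ℍ⁰(D×D). -/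
noncomputable section

/-- The index set `Λ = ℤ × (ℕ∖{0})`, realized as pairs of integers with positive second entry. -/
def Lam : Set (ℤ × ℤ) := {l | 1 ≤ l.2}

/-- The double Fourier coefficient `ℱ_l ℱ_{l'} (H_φ)` of the kernel `H_φ` representing the
quasi-geostrophic nonlinearity, in terms of the (odd-in-`k` extended) Fourier coefficients
`c = φ̂` of the test function `φ`: for `l = (j,k)`, `l' = (j',k')`,
`ℱ_lℱ_{l'}(H_φ) = (1/(4i))·[(j'k − jk') c_{j+j',k+k'} − (j'k + jk') c_{j+j',k−k'}]
  ·(1/(j²+k²) − 1/(j'²+k'²))`. -/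
def Hcoeff (c : ℤ × ℤ → ℂ) (l l' : ℤ × ℤ) : ℂ :=
  (1 / (4 * Complex.I)) *
    (((l'.1 * l.2 - l.1 * l'.2 : ℤ) : ℂ) * c (l.1 + l'.1, l.2 + l'.2)
      - ((l'.1 * l.2 + l.1 * l'.2 : ℤ) : ℂ) * c (l.1 + l'.1, l.2 - l'.2)) *
    (1 / ((l.1 : ℂ)^2 + (l.2 : ℂ)^2) - 1 / ((l'.1 : ℂ)^2 + (l'.2 : ℂ)^2))

def gW (l : ℤ × ℤ) : ℝ := 2 * ((1 / (1 + (l.1 : ℝ)^2)) * (1 / (1 + (l.2 : ℝ)^2)))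

def wW (c : ℤ × ℤ → ℂ) (m : ℤ × ℤ) : ℝ := ‖c m‖^2 * ((m.1 : ℝ)^2 + (m.2 : ℝ)^2)^2

theorem gW_nonneg (l : ℤ × ℤ) : 0 ≤ gW l := by unfold gW; positivity

theorem wW_nonneg (c : ℤ × ℤ → ℂ) (l : ℤ × ℤ) : 0 ≤ wW c l := by unfold wW; positivity

theorem summable_one_div_int : Summable (fun j : ℤ => 1 / (1 + (j : ℝ)^2)) := by
  have h : Summable (fun j : ℤ => 1 / (j : ℝ)^2) :=
    Real.summable_one_div_int_pow.mpr (by norm_num)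
  refine Summable.of_norm_bounded_eventually h ?_
  have : ∀ᶠ j : ℤ in Filter.cofinite, j ≠ 0 := by
    rw [Filter.eventually_cofinite]
    simp only [not_not]
    exact Set.finite_singleton (0 : ℤ)
  filter_upwards [this] with j hj
  have hj' : (0:ℝ) < (j:ℝ)^2 := by positivity
  rw [Real.norm_of_nonneg (by positivity)]
  apply one_div_le_one_div_of_le hj'
  linarith

theorem gW_summable : Summable gW := by
  have h := summable_one_div_int.mul_of_nonneg summable_one_div_int
    (fun j => by positivity) (fun j => by positivity)
  exact h.mul_left 2

theorem wW_sum (c : ℤ × ℤ → ℂ) (hc : ∀ m n : ℤ, c (m, -n) = -c (m, n))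
    (hs : Summable (fun m : Lam => wW c m.1)) :
    Summable (wW c) ∧ ∑' m, wW c m = 2 * ∑' m : Lam, wW c m.1 := by
  let σ : ℤ × ℤ ≃ ℤ × ℤ := Equiv.prodCongr (Equiv.refl ℤ) (Equiv.neg ℤ)
  have h1 : Summable (Lam.indicator (wW c)) := summable_subtype_iff_indicator.mp hs
  have h2 : Summable (Lam.indicator (wW c) ∘ σ) := (Equiv.summable_iff σ).mpr h1
  have e : wW c = fun m => Lam.indicator (wW c) m + (Lam.indicator (wW c) ∘ σ) m := by
    funext ⟨m, n⟩
    have hw : wW c (m, -n) = wW c (m, n) := by simp [wW, hc]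
    have hσ : σ (m, n) = (m, -n) := rfl
    simp only [Function.comp, hσ, Set.indicator_apply, Lam, Set.mem_ofPred_eq, hw]
    rcases lt_trichotomy n 0 with h | h | h
    · rw [if_neg (by omega), if_pos (by omega)]; simp
    · subst h
      have h0 := hc m 0
      have h0' : c (m, 0) = 0 := by
        rw [neg_zero] at h0
        exact self_eq_neg.mp h0
      simp [wW, h0']
    · rw [if_pos (by omega), if_neg (by omega)]; simp
  refine ⟨by rw [e]; exact h1.add h2, ?_⟩
  rw [e, h1.tsum_add h2]
  have : ∑' m, (Lam.indicator (wW c) ∘ σ) m = ∑' m, Lam.indicator (wW c) m :=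
    Equiv.tsum_eq σ (Lam.indicator (wW c))
  rw [this, ← e, ← tsum_subtype Lam (wW c)]
  ring

theorem alg_bound (j k p q : ℝ) :
    (p * k - j * q)^2 * ((p^2+q^2) - (j^2+k^2))^2
      ≤ 4 * ((j+p)^2 + (k+q)^2)^2 * ((j^2+k^2) * (p^2+q^2)) := by
  set M := (j+p)^2 + (k+q)^2 with hM
  have hM0 : 0 ≤ M := by positivity
  have ha : 0 ≤ j^2+k^2 := by positivity
  have hb : 0 ≤ p^2+q^2 := by positivity
  have h1 : (p * k - j * q)^2 ≤ (j^2+k^2) * M := by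
    rw [hM]; nlinarith [sq_nonneg (j*(j+p)+k*(k+q))]
  have h2 : (p * k - j * q)^2 ≤ (p^2+q^2) * M := by
    rw [hM]; nlinarith [sq_nonneg (p*(j+p)+q*(k+q))]
  have h3 : ((p^2+q^2) - (j^2+k^2))^2 ≤ M * (2 * ((j^2+k^2) + (p^2+q^2))) := by
    have h4 : ((p^2+q^2) - (j^2+k^2))^2 ≤ M * ((p-j)^2+(q-k)^2) := by
      rw [hM]; nlinarith [sq_nonneg ((j+p)*(q-k) - (k+q)*(p-j))]
    refine h4.trans (mul_le_mul_of_nonneg_left ?_ hM0)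
    nlinarith [sq_nonneg (p+j), sq_nonneg (q+k)]
  rcases le_total (j^2+k^2) (p^2+q^2) with h | h
  · have h5 : ((p^2+q^2) - (j^2+k^2))^2 ≤ M * (4 * (p^2+q^2)) :=
      h3.trans (mul_le_mul_of_nonneg_left (by linarith) hM0)
    calc _ ≤ ((j^2+k^2) * M) * (M * (4 * (p^2+q^2))) :=
          mul_le_mul h1 h5 (sq_nonneg _) (by positivity)
      _ = _ := by ring
  · have h5 : ((p^2+q^2) - (j^2+k^2))^2 ≤ M * (4 * (j^2+k^2)) :=
      h3.trans (mul_le_mul_of_nonneg_left (by linarith) hM0)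
    calc _ ≤ ((p^2+q^2) * M) * (M * (4 * (j^2+k^2))) :=
          mul_le_mul h2 h5 (sq_nonneg _) (by positivity)
      _ = _ := by ring

theorem g_bound (j k : ℝ) (hk : 1 ≤ k^2) :
    (1 / (j^2+k^2))^2 ≤ 2 * ((1 / (1 + j^2)) * (1 / (1 + k^2))) := by
  have h0 : 0 < j^2+k^2 := by nlinarith [sq_nonneg j]
  have h1 : 1 + j^2 ≤ j^2+k^2 := by linarith
  have h2 : 1 + k^2 ≤ 2 * (j^2+k^2) := by nlinarith [sq_nonneg j]
  have h3 : (1+j^2)*(1+k^2) ≤ (j^2+k^2) * (2 * (j^2+k^2)) :=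
    mul_le_mul h1 h2 (by positivity) h0.le
  have : 2 * ((1 / (1 + j^2)) * (1 / (1 + k^2))) = 2 / ((1+j^2)*(1+k^2)) := by
    field_simp
  rw [this, one_div, inv_pow, ← one_div, div_le_div_iff₀ (by positivity) (by positivity)]
  nlinarith

theorem T_bound (j k p q : ℝ) (hk : 1 ≤ k^2) (hq : 1 ≤ q^2) :
    (p * k - j * q)^2 * (1 / (j^2+k^2) - 1 / (p^2+q^2))^2
      ≤ 2 * ((j+p)^2 + (k+q)^2)^2 *
        (2 * ((1 / (1 + j^2)) * (1 / (1 + k^2))) + 2 * ((1 / (1 + p^2)) * (1 / (1 + q^2)))) := by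
  have ha : 0 < j^2+k^2 := by nlinarith [sq_nonneg j]
  have hb : 0 < p^2+q^2 := by nlinarith [sq_nonneg p]
  have h := alg_bound j k p q
  have g1 := g_bound j k hk
  have g2 := g_bound p q hq
  have h1 : (p * k - j * q)^2 * (1 / (j^2+k^2) - 1 / (p^2+q^2))^2
      ≤ 4 * ((j+p)^2 + (k+q)^2)^2 * ((1 / (j^2+k^2)) * (1 / (p^2+q^2))) := by
    generalize j^2+k^2 = a at *
    generalize p^2+q^2 = b at *
    have e1 : (p * k - j * q)^2 * (1 / a - 1 / b)^2
        = ((p * k - j * q)^2 * (b - a)^2) / (a * b)^2 := by field_simp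
    have e2 : 4 * ((j+p)^2 + (k+q)^2)^2 * ((1 / a) * (1 / b))
        = (4 * ((j+p)^2 + (k+q)^2)^2 * (a * b)) / (a * b)^2 := by field_simp
    rw [e1, e2]
    gcongr
  refine h1.trans ?_
  have hM : 0 ≤ ((j+p)^2 + (k+q)^2)^2 := by positivity
  have : 2 * ((1 / (j^2+k^2)) * (1 / (p^2+q^2))) ≤
      2 * ((1 / (1 + j^2)) * (1 / (1 + k^2))) + 2 * ((1 / (1 + p^2)) * (1 / (1 + q^2))) := by
    nlinarith [sq_nonneg (1 / (j^2+k^2) - 1 / (p^2+q^2))]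
  nlinarith [mul_le_mul_of_nonneg_left this hM]

theorem H_bound (c : ℤ × ℤ → ℂ) (l l' : ℤ × ℤ) (hl : l ∈ Lam) (hl' : l' ∈ Lam) :
    ‖Hcoeff c l l'‖^2 ≤ (1/4) * ((gW l + gW l') *
      (wW c (l.1 + l'.1, l.2 + l'.2) + wW c (l.1 + l'.1, l.2 - l'.2))) := by
  obtain ⟨j, k⟩ := l
  obtain ⟨p, q⟩ := l'
  have hk : (1:ℝ) ≤ k := by exact_mod_cast (show (1:ℤ) ≤ k from hl)
  have hq : (1:ℝ) ≤ q := by exact_mod_cast (show (1:ℤ) ≤ q from hl')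
  have t1 := T_bound j k p q (by nlinarith) (by nlinarith)
  have t2 := T_bound j k p (-q) (by nlinarith) (by nlinarith)
  simp only [gW, wW, Hcoeff]
  set x := ‖c (j + p, k + q)‖ with hx
  set y := ‖c (j + p, k - q)‖ with hy
  set D : ℝ := 1 / ((j:ℝ)^2+(k:ℝ)^2) - 1 / ((p:ℝ)^2+(q:ℝ)^2) with hD
  have eD : (1 / ((j : ℂ)^2 + (k : ℂ)^2) - 1 / ((p : ℂ)^2 + (q : ℂ)^2)) = (D : ℂ) := by
    rw [hD]; push_cast; rfl
  set A : ℝ := (p:ℝ) * k - j * q with hA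
  set B : ℝ := (p:ℝ) * k + j * q with hB
  have eA : ((p * k - j * q : ℤ) : ℂ) = (A : ℂ) := by rw [hA]; push_cast; rfl
  have eB : ((p * k + j * q : ℤ) : ℂ) = (B : ℂ) := by rw [hB]; push_cast; rfl
  rw [eD, eA, eB, norm_mul, norm_mul]
  have n0 : ‖(1 / (4 * Complex.I) : ℂ)‖ = 1/4 := by simp
  have n1 : ‖(A : ℂ) * c (j + p, k + q) - (B : ℂ) * c (j + p, k - q)‖ ≤ |A| * x + |B| * y := by
    refine (norm_sub_le _ _).trans ?_
    rw [norm_mul, norm_mul, Complex.norm_real, Complex.norm_real]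
    rfl
  have n2 : ‖(D : ℂ)‖ = |D| := by rw [Complex.norm_real]; rfl
  rw [n0, n2, mul_pow, mul_pow, sq_abs]
  have n3 : ‖(A : ℂ) * c (j + p, k + q) - (B : ℂ) * c (j + p, k - q)‖^2
      ≤ 2 * (A^2 * x^2 + B^2 * y^2) := by
    have := pow_le_pow_left₀ (norm_nonneg _) n1 2
    refine this.trans ?_
    have e1 : A^2 * x^2 = (|A| * x)^2 := by rw [mul_pow, sq_abs]
    have e2 : B^2 * y^2 = (|B| * y)^2 := by rw [mul_pow, sq_abs]
    rw [e1, e2]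
    linarith [sq_nonneg (|A| * x - |B| * y), add_pow_two (|A| * x) (|B| * y),
      sub_sq (|A| * x) (|B| * y)]
  have t2' : B^2 * D^2 ≤ 2 * (((j:ℝ)+p)^2 + ((k:ℝ)-q)^2)^2 *
        (2 * ((1 / (1 + (j:ℝ)^2)) * (1 / (1 + (k:ℝ)^2)))
          + 2 * ((1 / (1 + (p:ℝ)^2)) * (1 / (1 + (q:ℝ)^2)))) := by
    have e : (p:ℝ) * k - j * (-q) = B := by rw [hB]; ring
    rw [e, neg_sq, ← sub_eq_add_neg] at t2
    exact t2
  push_cast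
  set G := 2 * ((1 / (1 + (j:ℝ)^2)) * (1 / (1 + (k:ℝ)^2)))
          + 2 * ((1 / (1 + (p:ℝ)^2)) * (1 / (1 + (q:ℝ)^2)))
  have m1 := mul_le_mul_of_nonneg_right t1 (sq_nonneg x)
  have m2 := mul_le_mul_of_nonneg_right t2' (sq_nonneg y)
  have m3 := mul_le_mul_of_nonneg_right n3 (sq_nonneg D)
  linarith

/-- **Lemma 3.1 (`H_φ ∈ ℍ⁰`).** There is a constant `C > 0` such that for every family of
Fourier coefficients `c` (extended oddly in the second index, so `c (m, -n) = -c (m, n)`,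
which in particular forces `c (m, 0) = 0`) with `∑_{m∈ℤ,n≥1} |c_{m,n}|²(m²+n²)² < ∞`, the
double Fourier coefficients of `H_φ` are square-summable, with
`∑_{l,l'∈Λ} |ℱ_lℱ_{l'}(H_φ)|² ≤ C ∑_{m∈ℤ,n≥1} |c_{m,n}|²(m²+n²)²`. -/
theorem Hphi_mem_H0 :
    ∃ C : ℝ, 0 < C ∧ ∀ c : ℤ × ℤ → ℂ,
      (∀ m n : ℤ, c (m, -n) = -c (m, n)) →
      Summable (fun m : Lam => ‖c m.1‖^2 * ((m.1.1 : ℝ)^2 + (m.1.2 : ℝ)^2)^2) →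
      Summable (fun p : Lam × Lam => ‖Hcoeff c p.1.1 p.2.1‖^2) ∧
      ∑' p : Lam × Lam, ‖Hcoeff c p.1.1 p.2.1‖^2
        ≤ C * ∑' m : Lam, ‖c m.1‖^2 * ((m.1.1 : ℝ)^2 + (m.1.2 : ℝ)^2)^2 := by
  refine ⟨2 * ∑' l, gW l + 1, ?_, ?_⟩
  · have : 0 ≤ ∑' l, gW l := tsum_nonneg gW_nonneg
    linarith
  intro c hc hs
  obtain ⟨hw, hwS⟩ := wW_sum c hc hs
  change _ ∧ _ ≤ _ * ∑' m : Lam, wW c m.1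
  set S := ∑' m : Lam, wW c m.1 with hS
  have hS0 : 0 ≤ S := tsum_nonneg fun m => wW_nonneg c _
  let F : (ℤ × ℤ) × (ℤ × ℤ) → ℝ := fun x => gW x.1 * wW c x.2
  have hF0 : ∀ x, 0 ≤ F x := fun x => mul_nonneg (gW_nonneg _) (wW_nonneg _ _)
  have hF : Summable F := gW_summable.mul_of_nonneg hw gW_nonneg (wW_nonneg c)
  have hFS : ∑' x, F x = (∑' l, gW l) * (2 * S) := by
    rw [← hwS]
    exact (gW_summable.tsum_mul_tsum hw hF).symm
  have key : ∀ e : Lam × Lam → (ℤ × ℤ) × (ℤ × ℤ), Function.Injective e →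
      Summable (fun p => F (e p)) ∧ ∑' p, F (e p) ≤ (∑' l, gW l) * (2 * S) := by
    intro e he
    refine ⟨hF.comp_injective he, ?_⟩
    rw [← hFS]
    exact tsum_comp_le_tsum_of_inj hF hF0 he
  obtain ⟨s1, b1⟩ := key (fun p => (p.1.1, (p.1.1.1 + p.2.1.1, p.1.1.2 + p.2.1.2))) (by
    rintro ⟨⟨⟨a, b⟩, h⟩, ⟨⟨a', b'⟩, h'⟩⟩ ⟨⟨⟨d, f⟩, i⟩, ⟨⟨d', f'⟩, i'⟩⟩ H
    simp only [Prod.mk.injEq, Subtype.mk.injEq] at H ⊢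
    omega)
  obtain ⟨s2, b2⟩ := key (fun p => (p.2.1, (p.1.1.1 + p.2.1.1, p.1.1.2 + p.2.1.2))) (by
    rintro ⟨⟨⟨a, b⟩, h⟩, ⟨⟨a', b'⟩, h'⟩⟩ ⟨⟨⟨d, f⟩, i⟩, ⟨⟨d', f'⟩, i'⟩⟩ H
    simp only [Prod.mk.injEq, Subtype.mk.injEq] at H ⊢
    omega)
  obtain ⟨s3, b3⟩ := key (fun p => (p.1.1, (p.1.1.1 + p.2.1.1, p.1.1.2 - p.2.1.2))) (by
    rintro ⟨⟨⟨a, b⟩, h⟩, ⟨⟨a', b'⟩, h'⟩⟩ ⟨⟨⟨d, f⟩, i⟩, ⟨⟨d', f'⟩, i'⟩⟩ H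
    simp only [Prod.mk.injEq, Subtype.mk.injEq] at H ⊢
    omega)
  obtain ⟨s4, b4⟩ := key (fun p => (p.2.1, (p.1.1.1 + p.2.1.1, p.1.1.2 - p.2.1.2))) (by
    rintro ⟨⟨⟨a, b⟩, h⟩, ⟨⟨a', b'⟩, h'⟩⟩ ⟨⟨⟨d, f⟩, i⟩, ⟨⟨d', f'⟩, i'⟩⟩ H
    simp only [Prod.mk.injEq, Subtype.mk.injEq] at H ⊢
    omega)
  have hsum := (((s1.add s2).add s3).add s4).mul_left (1/4 : ℝ)
  have hle : ∀ p : Lam × Lam, ‖Hcoeff c p.1.1 p.2.1‖^2 ≤ _ := fun p =>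
    (H_bound c p.1.1 p.2.1 p.1.2 p.2.2).trans (le_of_eq (b :=
      (1/4 : ℝ) * (F (p.1.1, (p.1.1.1 + p.2.1.1, p.1.1.2 + p.2.1.2))
        + F (p.2.1, (p.1.1.1 + p.2.1.1, p.1.1.2 + p.2.1.2))
        + F (p.1.1, (p.1.1.1 + p.2.1.1, p.1.1.2 - p.2.1.2))
        + F (p.2.1, (p.1.1.1 + p.2.1.1, p.1.1.2 - p.2.1.2)))) (by simp only [F]; ring))
  have hsH : Summable (fun p : Lam × Lam => ‖Hcoeff c p.1.1 p.2.1‖^2) :=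
    Summable.of_nonneg_of_le (fun p => sq_nonneg _) hle hsum
  refine ⟨hsH, ?_⟩
  have hfin := hsH.tsum_le_tsum hle hsum
  rw [tsum_mul_left, ((s1.add s2).add s3).tsum_add s4, (s1.add s2).tsum_add s3,
    s1.tsum_add s2] at hfin
  nlinarith
end
end

section
/- Higher regularity of H_φ (Remark 3.2, positive part): For every δ with 0 ≤ δ < 1 there exists a constant C_δ > 0 such that for every family of complex numbers (φ̂_{m,n})_{m∈ℤ, n≥1} with ∑_{m∈ℤ, n≥1} |φ̂_{m,n}|² (m²+n²)^{2+δ} < ∞, one has ∑_{l,l' ∈ Λ} (1+|l|²+|l'|²)^δ |ℱ_lℱ_{l'}(H_φ)|² ≤ C_δ · ∑_{m∈ℤ, n≥1} |φ̂_{m,n}|² (m²+n²)^{2+δ}. In other words, φ ∈ ℍ^{2+δ} implies H_φ ∈ ℍ^δ(D×D) for every δ < 1. -/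
noncomputable section

def wfun (δ : ℝ) (l : ℤ × ℤ) : ℝ := ((l.1 : ℝ)^2 + (l.2 : ℝ)^2) ^ (δ - 2)

def Gfun (δ : ℝ) (c : ℤ × ℤ → ℂ) (m : ℤ × ℤ) : ℝ :=
  ‖c m‖^2 * ((m.1 : ℝ)^2 + (m.2 : ℝ)^2) ^ ((2 : ℝ) + δ)

lemma wfun_nonneg (δ : ℝ) (l : ℤ × ℤ) : 0 ≤ wfun δ l := by unfold wfun; positivity

lemma Gfun_nonneg (δ : ℝ) (c : ℤ × ℤ → ℂ) (l : ℤ × ℤ) : 0 ≤ Gfun δ c l := by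
  unfold Gfun; positivity

lemma wfun_summable (δ : ℝ) (hδ1 : δ < 1) : Summable (wfun δ) := by
  have h := EisensteinSeries.summable_one_div_norm_rpow (k := 4 - 2 * δ) (by linarith)
  rw [← (finTwoArrowEquiv ℤ).symm.summable_iff] at h
  refine Summable.of_nonneg_of_le (wfun_nonneg δ) (fun l => ?_) h
  obtain ⟨j, k⟩ := l
  set x : Fin 2 → ℤ := (finTwoArrowEquiv ℤ).symm (j, k) with hx
  have hx0 : x 0 = j := rfl
  have hx1 : x 1 = k := rfl
  change ((j : ℝ)^2 + (k : ℝ)^2) ^ (δ - 2) ≤ ‖x‖ ^ (-(4 - 2 * δ))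
  by_cases h0 : x = 0
  · have hj : j = 0 := by rw [← hx0, h0]; rfl
    have hk : k = 0 := by rw [← hx1, h0]; rfl
    subst hj hk
    rw [h0]
    simp only [Int.cast_zero, norm_zero]
    rw [Real.zero_rpow (by linarith)]
    norm_num
    rw [Real.zero_rpow (by linarith)]
  · have hpos : 0 < ‖x‖ := norm_pos_iff.mpr h0
    have e : ‖x‖ ^ (-(4 - 2 * δ)) = (‖x‖ ^ 2) ^ (δ - 2) := by
      rw [← Real.rpow_natCast, ← Real.rpow_mul hpos.le]
      congr 1; push_cast; ring
    rw [e]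
    apply Real.rpow_le_rpow_of_nonpos (by positivity) _ (by linarith)
    have : ‖x‖ ≤ √((j : ℝ)^2 + (k : ℝ)^2) := by
      rw [pi_norm_le_iff_of_nonneg (Real.sqrt_nonneg _)]
      intro i
      fin_cases i
      · change ‖x 0‖ ≤ _
        rw [hx0, Int.norm_eq_abs]
        apply Real.abs_le_sqrt; nlinarith [sq_nonneg (k : ℝ)]
      · change ‖x 1‖ ≤ _
        rw [hx1, Int.norm_eq_abs]
        apply Real.abs_le_sqrt; nlinarith [sq_nonneg (j : ℝ)]
    calc ‖x‖^2 ≤ √((j : ℝ)^2 + (k : ℝ)^2) ^ 2 := by gcongr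
      _ = _ := Real.sq_sqrt (by positivity)

lemma Gfun_hasSum (δ : ℝ) (c : ℤ × ℤ → ℂ) (hc : ∀ m n : ℤ, c (m, -n) = -c (m, n))
    (hs : Summable (fun m : Lam => Gfun δ c m.1)) :
    HasSum (Gfun δ c) (2 * ∑' m : Lam, Gfun δ c m.1) := by
  have h1 : HasSum (Lam.indicator (Gfun δ c)) (∑' m : Lam, Gfun δ c m.1) :=
    hasSum_subtype_iff_indicator.mp hs.hasSum
  have h2 := ((Equiv.prodCongr (Equiv.refl ℤ) (Equiv.neg ℤ)).hasSum_iff).mpr h1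
  have h3 := h1.add h2
  rw [← two_mul] at h3
  convert h3 using 1
  funext x
  obtain ⟨m, n⟩ := x
  have hG : Gfun δ c (m, -n) = Gfun δ c (m, n) := by
    unfold Gfun; simp [hc]
  change _ = Lam.indicator (Gfun δ c) (m, n) + Lam.indicator (Gfun δ c) (m, -n)
  simp only [Set.indicator_apply, hG, Lam, Set.mem_ofPred_eq]
  rcases lt_trichotomy n 0 with h | h | h
  · rw [if_neg (by omega), if_pos (by omega), zero_add]
  · subst h
    have h0 := hc m 0
    rw [neg_zero] at h0
    have : c (m, 0) = 0 := self_eq_neg.mp h0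
    simp [Gfun, this]
  · rw [if_pos (by omega), if_neg (by omega), add_zero]

theorem cross_bd (j k p q : ℝ) (hA : 1 ≤ j^2+k^2) (hB : 1 ≤ p^2+q^2) :
    (p*k - j*q)^2 * (1/(j^2+k^2) - 1/(p^2+q^2))^2
      ≤ 4 * ((j+p)^2+(k+q)^2)^2 * (1 / ((j^2+k^2)*(p^2+q^2))) := by
  have hX1 : (p*k - j*q)^2 ≤ ((j+p)^2+(k+q)^2) * (j^2+k^2) := by
    nlinarith [sq_nonneg ((j+p)*j+(k+q)*k)]
  have hX2 : (p*k - j*q)^2 ≤ ((j+p)^2+(k+q)^2) * (p^2+q^2) := by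
    nlinarith [sq_nonneg ((j+p)*p+(k+q)*q)]
  have hD : ((p^2+q^2) - (j^2+k^2))^2 ≤ ((j+p)^2+(k+q)^2) * (2 * ((j^2+k^2)+(p^2+q^2))) := by
    have h1 : ((p^2+q^2) - (j^2+k^2))^2 ≤ ((j+p)^2+(k+q)^2) * ((p-j)^2+(q-k)^2) := by
      nlinarith [sq_nonneg ((j+p)*(q-k)-(k+q)*(p-j))]
    refine h1.trans (mul_le_mul_of_nonneg_left ?_ (by positivity))
    nlinarith [sq_nonneg (p+j), sq_nonneg (q+k)]
  generalize hS : (j+p)^2+(k+q)^2 = S at *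
  have hS0 : 0 ≤ S := by rw [← hS]; positivity
  generalize j^2+k^2 = A at *
  generalize p^2+q^2 = B at *
  have hX0 : 0 ≤ (p*k-j*q)^2 := sq_nonneg _
  generalize (p*k-j*q)^2 = X at *
  have hA0 : 0 < A := by linarith
  have hB0 : 0 < B := by linarith
  have e : X * (1/A - 1/B)^2 = X * (B - A)^2 / (A*B)^2 := by field_simp
  have e' : 4 * S^2 * (1/(A*B)) = 4 * S^2 * (A*B) / (A*B)^2 := by field_simp
  rw [e, e']
  refine div_le_div_of_nonneg_right ?_ (by positivity)
  have h1 := mul_le_mul_of_nonneg_right hX1 hB0.le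
  have h2 := mul_le_mul_of_nonneg_right hX2 hA0.le
  have h3 := mul_le_mul_of_nonneg_left hD hX0
  have h4 := mul_le_mul_of_nonneg_left (add_le_add h1 h2) hS0
  linarith

lemma weight_bd (δ A B : ℝ) (hδ0 : 0 ≤ δ) (hδ1 : δ < 1) (hA : 1 ≤ A) (hB : 1 ≤ B) :
    (1 + A + B)^δ * (1/(A*B)) ≤ 3 * (A^(δ-2) + B^(δ-2)) := by
  have key : ∀ A B : ℝ, 1 ≤ A → A ≤ B → (1 + A + B)^δ * (1/(A*B)) ≤ 3 * A^(δ-2) := by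
    intro A B hA hAB
    have hA0 : 0 < A := by linarith
    have hB0 : 0 < B := by linarith
    have h1 : (1 + A + B)^δ ≤ 3 * B^δ := by
      calc (1 + A + B)^δ ≤ (3*B)^δ := by
            apply Real.rpow_le_rpow <;> linarith
        _ = 3^δ * B^δ := Real.mul_rpow (by norm_num) hB0.le
        _ ≤ 3 * B^δ := by
            gcongr
            calc (3:ℝ)^δ ≤ 3^(1:ℝ) := Real.rpow_le_rpow_of_exponent_le (by norm_num) hδ1.le
              _ = 3 := Real.rpow_one 3
    calc (1 + A + B)^δ * (1/(A*B)) ≤ (3 * B^δ) * (1/(A*B)) := by gcongr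
      _ = 3 * (B^(δ-1) * A⁻¹) := by
          rw [Real.rpow_sub_one hB0.ne']; field_simp
      _ ≤ 3 * (A^(δ-1) * A⁻¹) := by
          have := Real.rpow_le_rpow_of_nonpos hA0 hAB (by linarith : δ - 1 ≤ 0)
          gcongr
      _ = 3 * A^(δ-2) := by
          rw [show δ - 2 = δ - 1 - 1 by ring, Real.rpow_sub_one hA0.ne' (δ-1)]; rfl
  have hA' : 0 ≤ A^(δ-2) := by positivity
  have hB' : 0 ≤ B^(δ-2) := by positivity
  rcases le_total A B with h | h
  · linarith [key A B hA h]
  · have := key B A hB h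
    rw [add_right_comm, mul_comm B A] at this
    linarith

lemma Lam_sq (l : ℤ × ℤ) (h : 1 ≤ l.2) : 1 ≤ (l.1 : ℝ)^2 + (l.2 : ℝ)^2 := by
  have : (1:ℝ) ≤ l.2 := by exact_mod_cast h
  nlinarith [sq_nonneg (l.1 : ℝ)]

lemma G_bd (δ : ℝ) (hδ0 : 0 ≤ δ) (c : ℤ × ℤ → ℂ) (hc : ∀ m n : ℤ, c (m, -n) = -c (m, n))
    (m : ℤ × ℤ) : ‖c m‖^2 * ((m.1 : ℝ)^2 + (m.2 : ℝ)^2)^2 ≤ Gfun δ c m := by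
  obtain ⟨m, n⟩ := m
  unfold Gfun
  by_cases hn : n = 0
  · subst hn
    have := hc m 0
    rw [neg_zero] at this
    rw [self_eq_neg.mp this]; simp
  · have h1 : 1 ≤ (m : ℝ)^2 + (n : ℝ)^2 := by
      have : 1 ≤ n^2 := by have := sq_nonneg n; have : n^2 ≠ 0 := pow_ne_zero 2 hn; omega
      have : (1:ℝ) ≤ (n:ℝ)^2 := by exact_mod_cast this
      nlinarith [sq_nonneg (m : ℝ)]
    dsimp only
    gcongr
    rw [← Real.rpow_natCast]
    apply Real.rpow_le_rpow_of_exponent_le h1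
    push_cast; linarith

lemma term_bd (δ : ℝ) (hδ0 : 0 ≤ δ) (hδ1 : δ < 1) (c : ℤ × ℤ → ℂ)
    (hc : ∀ m n : ℤ, c (m, -n) = -c (m, n)) (l l' : ℤ × ℤ) (hl : 1 ≤ l.2) (hl' : 1 ≤ l'.2) :
    (1 + ((l.1 : ℝ)^2 + (l.2 : ℝ)^2) + ((l'.1 : ℝ)^2 + (l'.2 : ℝ)^2)) ^ δ * ‖Hcoeff c l l'‖^2
    ≤ 3/2 * ((Gfun δ c (l.1+l'.1, l.2+l'.2) + Gfun δ c (l.1+l'.1, l.2-l'.2))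
        * (wfun δ l + wfun δ l')) := by
  have hA := Lam_sq l hl
  have hB := Lam_sq l' hl'
  have hg1 := G_bd δ hδ0 c hc (l.1+l'.1, l.2+l'.2)
  have hg2 := G_bd δ hδ0 c hc (l.1+l'.1, l.2-l'.2)
  have hx1 := cross_bd l.1 l.2 l'.1 l'.2 hA hB
  have hx2 := cross_bd l.1 l.2 l'.1 (-l'.2) hA (by rw [neg_sq]; exact hB)
  have hw := weight_bd δ _ _ hδ0 hδ1 hA hB
  have hH : ‖Hcoeff c l l'‖^2 ≤ 1/8 *
      ((((l'.1:ℝ)*l.2 - l.1*l'.2)^2 * ‖c (l.1+l'.1, l.2+l'.2)‖^2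
        + ((l'.1:ℝ)*l.2 + l.1*l'.2)^2 * ‖c (l.1+l'.1, l.2-l'.2)‖^2)
        * (1/((l.1:ℝ)^2+(l.2:ℝ)^2) - 1/((l'.1:ℝ)^2+(l'.2:ℝ)^2))^2) := by
    unfold Hcoeff
    have e : (1 / ((l.1 : ℂ)^2 + (l.2 : ℂ)^2) - 1 / ((l'.1 : ℂ)^2 + (l'.2 : ℂ)^2)) =
      ((1/((l.1:ℝ)^2+(l.2:ℝ)^2) - 1/((l'.1:ℝ)^2+(l'.2:ℝ)^2) : ℝ) : ℂ) := by push_cast; rfl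
    rw [e, norm_mul, norm_mul, mul_pow, mul_pow, Complex.norm_real, Real.norm_eq_abs, sq_abs]
    have e2 : ‖(1 / (4 * Complex.I))‖^2 = 1/16 := by
      simp; norm_num
    rw [e2]
    set u := c (l.1+l'.1, l.2+l'.2)
    set v := c (l.1+l'.1, l.2-l'.2)
    set Z := (1/((l.1:ℝ)^2+(l.2:ℝ)^2) - 1/((l'.1:ℝ)^2+(l'.2:ℝ)^2))^2
    have hn : ‖((l'.1 * l.2 - l.1 * l'.2 : ℤ) : ℂ) * u - ((l'.1 * l.2 + l.1 * l'.2 : ℤ) : ℂ) * v‖^2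
        ≤ 2 * (((l'.1:ℝ)*l.2 - l.1*l'.2)^2 * ‖u‖^2 + ((l'.1:ℝ)*l.2 + l.1*l'.2)^2 * ‖v‖^2) := by
      refine (pow_le_pow_left₀ (norm_nonneg _) (norm_sub_le _ _) 2).trans ?_
      refine (add_sq_le).trans_eq ?_
      rw [norm_mul, norm_mul, Complex.norm_intCast, Complex.norm_intCast, mul_pow, mul_pow,
        sq_abs, sq_abs]
      push_cast; ring
    have hZ : 0 ≤ Z := sq_nonneg _
    have hm := mul_le_mul_of_nonneg_right hn hZ
    generalize ‖((l'.1 * l.2 - l.1 * l'.2 : ℤ) : ℂ) * u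
      - ((l'.1 * l.2 + l.1 * l'.2 : ℤ) : ℂ) * v‖^2 = N at *
    clear_value Z
    calc 1/16 * N * Z = 1/16 * (N * Z) := by ring
      _ ≤ 1/16 * _ := mul_le_mul_of_nonneg_left hm (by norm_num)
      _ = _ := by ring
  push_cast at hg1 hg2
  have ex2 : ((l'.1:ℝ)*l.2 + l.1*l'.2)^2 = ((l'.1:ℝ)*l.2 - l.1*(-l'.2))^2 := by ring
  rw [ex2] at hH
  rw [neg_sq, ← sub_eq_add_neg (l.2:ℝ)] at hx2
  unfold wfun
  set A := (l.1:ℝ)^2+(l.2:ℝ)^2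
  set B := (l'.1:ℝ)^2+(l'.2:ℝ)^2
  set S1 := ((l.1:ℝ)+l'.1)^2+((l.2:ℝ)+l'.2)^2
  set S2 := ((l.1:ℝ)+l'.1)^2+((l.2:ℝ)-l'.2)^2
  set a1 := ‖c (l.1+l'.1, l.2+l'.2)‖^2
  set a2 := ‖c (l.1+l'.1, l.2-l'.2)‖^2
  set g1 := Gfun δ c (l.1+l'.1, l.2+l'.2)
  set g2 := Gfun δ c (l.1+l'.1, l.2-l'.2)
  have ha1 : 0 ≤ a1 := sq_nonneg _
  have ha2 : 0 ≤ a2 := sq_nonneg _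
  have hAB : 0 ≤ 1/(A*B) := by positivity
  have hG : 0 ≤ g1 + g2 := add_nonneg (Gfun_nonneg _ _ _) (Gfun_nonneg _ _ _)
  clear_value a1 a2 g1 g2 S1 S2 A B
  have hH2 : ‖Hcoeff c l l'‖^2 ≤ 1/2 * ((g1+g2) * (1/(A*B))) := by
    have m1 := mul_le_mul_of_nonneg_right hx1 ha1
    have m2 := mul_le_mul_of_nonneg_right hx2 ha2
    have m3 := mul_le_mul_of_nonneg_right hg1 hAB
    have m4 := mul_le_mul_of_nonneg_right hg2 hAB
    linarith
  calc _ ≤ (1+A+B)^δ * (1/2 * ((g1+g2) * (1/(A*B)))) := by gcongr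
    _ = 1/2 * (g1+g2) * ((1+A+B)^δ * (1/(A*B))) := by ring
    _ ≤ 1/2 * (g1+g2) * (3 * (A^(δ-2) + B^(δ-2))) := by gcongr
    _ = _ := by ring

lemma inj_sum (G w : ℤ × ℤ → ℝ) (hG : Summable G) (hw : Summable w) (hG0 : ∀ x, 0 ≤ G x)
    (hw0 : ∀ x, 0 ≤ w x) (e : Lam × Lam → (ℤ × ℤ) × (ℤ × ℤ)) (he : Function.Injective e) :
    Summable (fun p => G (e p).1 * w (e p).2) ∧
      ∑' p, G (e p).1 * w (e p).2 ≤ (∑' x, G x) * ∑' x, w x := by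
  have h := hG.mul_of_nonneg hw hG0 hw0
  refine ⟨h.comp_injective he, ?_⟩
  rw [hG.tsum_mul_tsum hw h]
  exact tsum_comp_le_tsum_of_inj h (fun x => mul_nonneg (hG0 _) (hw0 _)) he

/-- **Remark 3.2 (positive part): higher regularity of `H_φ`.** For every `0 ≤ δ < 1` there is a
constant `C_δ > 0` such that for every family of Fourier coefficients `c` (extended oddly in
the second index) with `∑_{m∈ℤ,n≥1} |c_{m,n}|²(m²+n²)^{2+δ} < ∞` one has
`∑_{l,l'∈Λ} (1+|l|²+|l'|²)^δ |ℱ_lℱ_{l'}(H_φ)|² ≤ C_δ ∑_{m∈ℤ,n≥1} |c_{m,n}|²(m²+n²)^{2+δ}`;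
i.e. `φ ∈ ℍ^{2+δ}` implies `H_φ ∈ ℍ^δ(D×D)` for every `δ < 1`. -/
theorem Hphi_higher_regularity (δ : ℝ) (hδ0 : 0 ≤ δ) (hδ1 : δ < 1) :
    ∃ C : ℝ, 0 < C ∧ ∀ c : ℤ × ℤ → ℂ,
      (∀ m n : ℤ, c (m, -n) = -c (m, n)) →
      Summable (fun m : Lam =>
        ‖c m.1‖^2 * ((m.1.1 : ℝ)^2 + (m.1.2 : ℝ)^2) ^ ((2 : ℝ) + δ)) →
      Summable (fun p : Lam × Lam =>
        (1 + ((p.1.1.1 : ℝ)^2 + (p.1.1.2 : ℝ)^2) + ((p.2.1.1 : ℝ)^2 + (p.2.1.2 : ℝ)^2)) ^ δ *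
          ‖Hcoeff c p.1.1 p.2.1‖^2) ∧
      ∑' p : Lam × Lam,
          (1 + ((p.1.1.1 : ℝ)^2 + (p.1.1.2 : ℝ)^2) + ((p.2.1.1 : ℝ)^2 + (p.2.1.2 : ℝ)^2)) ^ δ *
            ‖Hcoeff c p.1.1 p.2.1‖^2
        ≤ C * ∑' m : Lam, ‖c m.1‖^2 * ((m.1.1 : ℝ)^2 + (m.1.2 : ℝ)^2) ^ ((2 : ℝ) + δ) := by
  have hw := wfun_summable δ hδ1
  have hW0 : 0 ≤ ∑' x, wfun δ x := tsum_nonneg (wfun_nonneg δ)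
  refine ⟨12 * (∑' x, wfun δ x) + 1, by positivity, ?_⟩
  intro c hc hs
  change Summable (fun m : Lam => Gfun δ c m.1) at hs
  change _ ∧ _ ≤ _ * ∑' m : Lam, Gfun δ c m.1
  have hGs := Gfun_hasSum δ c hc hs
  have hT0 : 0 ≤ ∑' m : Lam, Gfun δ c m.1 := tsum_nonneg fun m => Gfun_nonneg δ c m.1
  have I := inj_sum (Gfun δ c) (wfun δ) hGs.summable hw (Gfun_nonneg δ c) (wfun_nonneg δ)
  rw [hGs.tsum_eq] at I
  obtain ⟨s1, t1⟩ := I (fun p => ((p.1.1.1 + p.2.1.1, p.1.1.2 + p.2.1.2), p.1.1)) (by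
    rintro ⟨⟨⟨a, b⟩, h1⟩, ⟨⟨a', b'⟩, h2⟩⟩ ⟨⟨⟨d, e⟩, h3⟩, ⟨⟨d', e'⟩, h4⟩⟩ h
    simp only [Prod.mk.injEq, Subtype.mk.injEq] at h ⊢; omega)
  obtain ⟨s2, t2⟩ := I (fun p => ((p.1.1.1 + p.2.1.1, p.1.1.2 + p.2.1.2), p.2.1)) (by
    rintro ⟨⟨⟨a, b⟩, h1⟩, ⟨⟨a', b'⟩, h2⟩⟩ ⟨⟨⟨d, e⟩, h3⟩, ⟨⟨d', e'⟩, h4⟩⟩ h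
    simp only [Prod.mk.injEq, Subtype.mk.injEq] at h ⊢; omega)
  obtain ⟨s3, t3⟩ := I (fun p => ((p.1.1.1 + p.2.1.1, p.1.1.2 - p.2.1.2), p.1.1)) (by
    rintro ⟨⟨⟨a, b⟩, h1⟩, ⟨⟨a', b'⟩, h2⟩⟩ ⟨⟨⟨d, e⟩, h3⟩, ⟨⟨d', e'⟩, h4⟩⟩ h
    simp only [Prod.mk.injEq, Subtype.mk.injEq] at h ⊢; omega)
  obtain ⟨s4, t4⟩ := I (fun p => ((p.1.1.1 + p.2.1.1, p.1.1.2 - p.2.1.2), p.2.1)) (by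
    rintro ⟨⟨⟨a, b⟩, h1⟩, ⟨⟨a', b'⟩, h2⟩⟩ ⟨⟨⟨d, e⟩, h3⟩, ⟨⟨d', e'⟩, h4⟩⟩ h
    simp only [Prod.mk.injEq, Subtype.mk.injEq] at h ⊢; omega)
  have hsum := (((s1.hasSum.add s2.hasSum).add (s3.hasSum.add s4.hasSum)).mul_left (3/2))
  have hle : ∀ p : Lam × Lam, _ := fun p =>
    (term_bd δ hδ0 hδ1 c hc p.1.1 p.2.1 p.1.2 p.2.2).trans_eq
      (show _ = 3/2 * ((Gfun δ c (p.1.1.1 + p.2.1.1, p.1.1.2 + p.2.1.2) * wfun δ p.1.1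
        + Gfun δ c (p.1.1.1 + p.2.1.1, p.1.1.2 + p.2.1.2) * wfun δ p.2.1)
        + (Gfun δ c (p.1.1.1 + p.2.1.1, p.1.1.2 - p.2.1.2) * wfun δ p.1.1
        + Gfun δ c (p.1.1.1 + p.2.1.1, p.1.1.2 - p.2.1.2) * wfun δ p.2.1)) by ring)
  have hS := Summable.of_nonneg_of_le (fun p => by positivity) hle hsum.summable
  refine ⟨hS, ?_⟩
  refine (hasSum_le hle hS.hasSum hsum).trans ?_
  nlinarith
end
end

section
/- Optimality of the regularity of H_φ (Remark 3.2, sharpness): For every real number δ, the series ∑_{(j,k) ∈ ℤ×(ℕ∖{0}), j ≠ 0} (1 + 2j² + k² + (k−1)²)^δ · j²(2k−1)² / [ (j²+k²)² (j²+(k−1)²)² ] converges if and only if δ < 1. (This series expresses the squared ℍ^δ(D×D)-norm of the kernel H_φ for the test function φ(x,y)=sin(y), so that H_φ ∈ ℍ^δ(D×D) fails for δ ≥ 1 even for smooth φ.) -/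
theorem Hphi_aux_up (δ x y : ℝ) (hδ : δ < 1) (hx : 1 ≤ x ^ 2) (hy : 1 ≤ y) (m : ℝ) (hm : 0 < m)
    (hmN : m ^ 2 ≤ x ^ 2 + y ^ 2) :
    ((1 + 2 * x^2 + y^2 + (y - 1)^2) ^ δ) * (x^2 * (2 * y - 1)^2) /
      ((x^2 + y^2)^2 * (x^2 + (y - 1)^2)^2) ≤ 324 * m ^ (-(4 - 2 * δ)) := by
  obtain ⟨N, hN⟩ : ∃ N, N = x ^ 2 + y ^ 2 := ⟨_, rfl⟩
  obtain ⟨M, hM⟩ : ∃ M, M = x ^ 2 + (y - 1) ^ 2 := ⟨_, rfl⟩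
  obtain ⟨W, hW⟩ : ∃ W, W = 1 + 2 * x^2 + y^2 + (y - 1)^2 := ⟨_, rfl⟩
  rw [← hN, ← hM, ← hW]
  rw [← hN] at hmN
  have hN0 : 0 < N := by nlinarith
  have hNM : N ≤ 3 * M := by nlinarith [sq_nonneg (y - 2)]
  have hM0 : 0 < M := by linarith
  have hNW : N ≤ W := by nlinarith [sq_nonneg (y - 1)]
  have hWN : W ≤ 3 * N := by nlinarith
  have hW0 : 0 < W := by linarith
  have e1 : W ^ δ = W ^ (δ - 2) * W ^ 2 := by
    rw [← Real.rpow_natCast W 2, ← Real.rpow_add hW0]; congr 1; push_cast; ring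
  have e2 : W ^ (δ - 2) ≤ N ^ (δ - 2) := Real.rpow_le_rpow_of_nonpos hN0 hNW (by linarith)
  have e3 : N ^ (δ - 2) ≤ (m ^ 2) ^ (δ - 2) :=
    Real.rpow_le_rpow_of_nonpos (by positivity) hmN (by linarith)
  have e4 : (m ^ 2) ^ (δ - 2) = m ^ (-(4 - 2 * δ)) := by
    rw [← Real.rpow_natCast m 2, ← Real.rpow_mul hm.le]; congr 1; push_cast; ring
  rw [← e4]
  have hP : x^2 * (2 * y - 1)^2 ≤ 4 * N ^ 2 := by
    have h1 : x ^ 2 ≤ N := by nlinarith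
    have h2 : (2 * y - 1)^2 ≤ 4 * N := by nlinarith
    calc _ ≤ N * (4 * N) := by gcongr
      _ = _ := by ring
  have hW2 : W ^ 2 ≤ 9 * N ^ 2 := by nlinarith
  have hM2 : N ^ 2 ≤ 9 * M ^ 2 := by nlinarith
  rw [div_le_iff₀ (by positivity), e1]
  calc W ^ (δ - 2) * W ^ 2 * (x^2 * (2 * y - 1)^2)
      ≤ (m ^ 2) ^ (δ - 2) * (9 * N ^ 2) * (4 * N ^ 2) := by
        have e5 := e2.trans e3
        have e6 : 0 ≤ W ^ (δ - 2) := by positivity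
        generalize W ^ (δ - 2) = A at e5 e6
        generalize (m ^ 2) ^ (δ - 2) = B at e5
        have e7 : 0 ≤ B := e6.trans e5
        gcongr
    _ = 36 * (m ^ 2) ^ (δ - 2) * N ^ 2 * N ^ 2 := by ring
    _ ≤ 36 * (m ^ 2) ^ (δ - 2) * N ^ 2 * (9 * M ^ 2) := by gcongr
    _ = _ := by ring

theorem Hphi_aux_low (δ x y : ℝ) (hδ : 1 ≤ δ) (hx : 1 ≤ x) (hy : x ≤ y) (hy2 : y ≤ 2 * x) :
    1 / (125 * x ^ 2) ≤ ((1 + 2 * x^2 + y^2 + (y - 1)^2) ^ δ) * (x^2 * (2 * y - 1)^2) /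
      ((x^2 + y^2)^2 * (x^2 + (y - 1)^2)^2) := by
  obtain ⟨N, hN⟩ : ∃ N, N = x ^ 2 + y ^ 2 := ⟨_, rfl⟩
  obtain ⟨M, hM⟩ : ∃ M, M = x ^ 2 + (y - 1) ^ 2 := ⟨_, rfl⟩
  obtain ⟨W, hW⟩ : ∃ W, W = 1 + 2 * x^2 + y^2 + (y - 1)^2 := ⟨_, rfl⟩
  rw [← hN, ← hM, ← hW]
  have hx0 : 0 < x := by linarith
  have hN0 : 0 < N := by nlinarith
  have hM0 : 0 < M := by nlinarith [sq_nonneg (y - 1)]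
  have hMN : M ≤ N := by nlinarith
  have hNW : N ≤ W := by nlinarith [sq_nonneg (y - 1)]
  have hN5 : N ≤ 5 * x ^ 2 := by nlinarith
  have hW1 : 1 ≤ W := by nlinarith [sq_nonneg (y - 1)]
  have e1 : N ≤ W ^ δ := hNW.trans (by
    simpa using Real.rpow_le_rpow_of_exponent_le hW1 hδ)
  have hP : x ^ 2 * x ^ 2 ≤ x^2 * (2 * y - 1)^2 := by
    gcongr; linarith
  rw [div_le_div_iff₀ (by positivity) (by positivity)]
  calc 1 * (N ^ 2 * M ^ 2) ≤ 1 * (N ^ 2 * N ^ 2) := by gcongr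
    _ = N * N ^ 3 := by ring
    _ ≤ N * (5 * x ^ 2) ^ 3 := by gcongr
    _ = N * (x ^ 2 * x ^ 2) * (125 * x ^ 2) := by ring
    _ ≤ W ^ δ * (x^2 * (2 * y - 1)^2) * (125 * x ^ 2) := by gcongr

/-- **Optimality of the regularity of `H_φ`** (Remark 3.2, sharpness). For every real `δ`, the
series `∑_{(j,k) ∈ ℤ×(ℕ∖{0}), j ≠ 0} (1 + 2j² + k² + (k−1)²)^δ · j²(2k−1)² /
((j²+k²)²(j²+(k−1)²)²)` converges if and only if `δ < 1`. -/
theorem Hphi_sharp_regularity (δ : ℝ) :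
    Summable (fun l : {l : ℤ × ℤ // l.1 ≠ 0 ∧ 1 ≤ l.2} =>
      ((1 + 2 * (l.1.1 : ℝ)^2 + (l.1.2 : ℝ)^2 + ((l.1.2 : ℝ) - 1)^2) ^ δ) *
        ((l.1.1 : ℝ)^2 * (2 * (l.1.2 : ℝ) - 1)^2) /
          (((l.1.1 : ℝ)^2 + (l.1.2 : ℝ)^2)^2 *
            ((l.1.1 : ℝ)^2 + ((l.1.2 : ℝ) - 1)^2)^2)) ↔ δ < 1 := by
  constructor
  · intro h
    by_contra! hδ
    let g : (Σ n : ℕ, Fin n) → {l : ℤ × ℤ // l.1 ≠ 0 ∧ 1 ≤ l.2} := fun p =>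
      ⟨((p.1 : ℤ), (p.1 : ℤ) + (p.2.1 : ℤ)), by
        have := p.2.2
        constructor <;> dsimp only <;> omega⟩
    have hg : Function.Injective g := by
      rintro ⟨n, i⟩ ⟨n', i'⟩ hh
      simp only [g, Subtype.mk.injEq, Prod.mk.injEq] at hh
      obtain ⟨h1, h2⟩ := hh
      have h1 : n = n' := by omega
      subst h1
      have : i = i' := by ext; omega
      rw [this]
    have h2 := h.comp_injective hg
    have h3 : Summable (fun p : (Σ n : ℕ, Fin n) => 1 / (125 * (p.1 : ℝ) ^ 2)) := by
      refine Summable.of_nonneg_of_le (fun p => by positivity) (fun p => ?_) h2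
      have hp := p.2.2
      have hp1 : (1 : ℝ) ≤ (p.1 : ℝ) := by exact_mod_cast (by omega : 1 ≤ p.1)
      have hp2 : ((p.2 : ℕ) : ℝ) ≤ (p.1 : ℝ) := by exact_mod_cast hp.le
      have hp3 : (0 : ℝ) ≤ ((p.2 : ℕ) : ℝ) := by positivity
      have := Hphi_aux_low δ (p.1 : ℝ) ((p.1 : ℝ) + ((p.2 : ℕ) : ℝ)) hδ hp1
        (by linarith) (by linarith)
      simpa [g] using this
    have h4 := h3.sigma
    simp only [tsum_fintype, Finset.sum_const, Finset.card_univ, Fintype.card_fin,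
      nsmul_eq_mul] at h4
    apply Real.not_summable_one_div_natCast
    refine (h4.mul_left 125).congr (fun n => ?_)
    rcases eq_or_ne (n : ℝ) 0 with h0 | h0
    · simp [h0]
    · field_simp
  · intro hδ
    have h := EisensteinSeries.summable_one_div_norm_rpow (k := 4 - 2 * δ) (by linarith)
    let g : {l : ℤ × ℤ // l.1 ≠ 0 ∧ 1 ≤ l.2} → (Fin 2 → ℤ) := fun l => ![l.1.1, l.1.2]
    have hg : Function.Injective g := by
      rintro ⟨⟨a, b⟩, _⟩ ⟨⟨c, d⟩, _⟩ hh
      have h1 := congrFun hh 0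
      have h2 := congrFun hh 1
      simp [g] at h1 h2
      simp [h1, h2]
    refine Summable.of_nonneg_of_le (fun p => by positivity) (fun p => ?_)
      ((h.comp_injective hg).mul_left 324)
    obtain ⟨⟨j, k⟩, hj, hk⟩ := p
    dsimp only at hj hk
    have hj1 : (1 : ℝ) ≤ (j : ℝ) ^ 2 := by
      have : 1 ≤ j ^ 2 := by have := sq_pos_of_ne_zero hj; omega
      exact_mod_cast this
    have hk1 : (1 : ℝ) ≤ (k : ℝ) := by exact_mod_cast hk
    refine Hphi_aux_up δ j k hδ hj1 hk1 ‖(![j, k] : Fin 2 → ℤ)‖ ?_ ?_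
    · rw [norm_pos_iff]
      intro h0
      exact hj (by simpa using congrFun h0 0)
    · have hle : ‖(![j, k] : Fin 2 → ℤ)‖ ≤ √((j : ℝ) ^ 2 + (k : ℝ) ^ 2) := by
        rw [pi_norm_le_iff_of_nonneg (by positivity)]
        intro i
        fin_cases i
        · simp only [Int.norm_eq_abs]
          exact Real.abs_le_sqrt (by simp; positivity)
        · simp only [Int.norm_eq_abs]
          exact Real.abs_le_sqrt (by simp; positivity)
      calc _ ≤ (√((j : ℝ) ^ 2 + (k : ℝ) ^ 2)) ^ 2 := by gcongr
        _ = _ := Real.sq_sqrt (by positivity)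
end

section
/- Lattice sum characterization: For every real number δ, the double series ∑_{(j,k) ∈ ℤ×(ℕ∖{0})} j²k² / (j²+k²)^{4−δ} converges if and only if δ < 1. -/
/-- **Lattice sum characterization.** For every real `δ`, the double series
`∑_{(j,k) ∈ ℤ×(ℕ∖{0})} j²k² / (j²+k²)^(4−δ)` converges if and only if `δ < 1`. -/
theorem lattice_sum_summable_iff (δ : ℝ) :
    Summable (fun l : {l : ℤ × ℤ // 1 ≤ l.2} =>
      ((l.1.1 : ℝ)^2 * (l.1.2 : ℝ)^2) /
        (((l.1.1 : ℝ)^2 + (l.1.2 : ℝ)^2) ^ ((4 : ℝ) - δ))) ↔ δ < 1 := by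
  constructor
  · intro h
    by_contra hδ
    push Not at hδ
    let φ : (Σ n : ℕ, Fin (n + 1)) → {l : ℤ × ℤ // 1 ≤ l.2} :=
      fun p => ⟨((p.1 : ℤ) + 1 + (p.2 : ℕ), (p.1 : ℤ) + 1), by simp⟩
    have hφ : Function.Injective φ := by
      rintro ⟨n, i⟩ ⟨m, j⟩ hh
      simp only [φ, Subtype.mk.injEq, Prod.mk.injEq] at hh
      obtain ⟨h1, h2⟩ := hh
      have hnm : n = m := by omega
      subst hnm
      have : i = j := by ext; omega
      rw [this]
    have h2 := h.comp_injective hφ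
    have h3 : Summable (fun p : (Σ n : ℕ, Fin (n + 1)) => 1 / (125 * ((p.1 : ℝ) + 1) ^ 2)) := by
      refine Summable.of_nonneg_of_le (fun p => by positivity) ?_ h2
      rintro ⟨n, i⟩
      have hi : ((i : ℕ) : ℝ) ≤ n := by exact_mod_cast Nat.lt_succ_iff.mp i.2
      have hi0 : (0 : ℝ) ≤ ((i : ℕ) : ℝ) := by positivity
      have hn0 : (0 : ℝ) ≤ (n : ℝ) := by positivity
      simp only [φ, Function.comp]
      push_cast
      generalize ((i : ℕ) : ℝ) = x at *
      generalize (n : ℝ) = y at *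
      have hN1 : 1 ≤ (y + 1 + x) ^ 2 + (y + 1) ^ 2 := by nlinarith
      have hN5 : (y + 1 + x) ^ 2 + (y + 1) ^ 2 ≤ 5 * (y + 1) ^ 2 := by nlinarith
      have hpow : ((y + 1 + x) ^ 2 + (y + 1) ^ 2) ^ (4 - δ) ≤ (5 * (y + 1) ^ 2) ^ 3 := by
        calc _ ≤ ((y + 1 + x) ^ 2 + (y + 1) ^ 2) ^ ((3 : ℕ) : ℝ) :=
              Real.rpow_le_rpow_of_exponent_le hN1 (by push_cast; linarith)
          _ = ((y + 1 + x) ^ 2 + (y + 1) ^ 2) ^ 3 := Real.rpow_natCast _ _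
          _ ≤ _ := by gcongr
      have hpos : 0 < ((y + 1 + x) ^ 2 + (y + 1) ^ 2) ^ (4 - δ) :=
        Real.rpow_pos_of_pos (by linarith) _
      calc 1 / (125 * (y + 1) ^ 2) = (y + 1) ^ 2 * (y + 1) ^ 2 / (5 * (y + 1) ^ 2) ^ 3 := by
            field_simp; norm_num
        _ ≤ (y + 1 + x) ^ 2 * (y + 1) ^ 2 / (5 * (y + 1) ^ 2) ^ 3 := by
            have : y + 1 ≤ y + 1 + x := by linarith
            gcongr ?_ ^ 2 * _ / _
        _ ≤ _ := by gcongr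
    have h4 := h3.sigma
    have h5 : Summable (fun n : ℕ => 1 / ((n : ℝ) + 1)) := by
      refine (h4.mul_left 125).congr fun n => ?_
      simp only [tsum_fintype, Finset.sum_const, Finset.card_univ, Fintype.card_fin, nsmul_eq_mul]
      push_cast
      field_simp
    refine Real.not_summable_one_div_natCast ((summable_nat_add_iff 1).mp ?_)
    refine h5.congr fun n => ?_
    push_cast
    rfl
  · intro hδ
    have hs := EisensteinSeries.summable_one_div_norm_rpow (k := 2 * (2 - δ)) (by linarith)
    let φ : {l : ℤ × ℤ // 1 ≤ l.2} → (Fin 2 → ℤ) := fun l => ![l.1.1, l.1.2]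
    have hφ : Function.Injective φ := by
      rintro ⟨⟨a, b⟩, h1⟩ ⟨⟨c, d⟩, h2⟩ hh
      have e0 := congrFun hh 0
      have e1 := congrFun hh 1
      simp [φ] at e0 e1
      simp [e0, e1]
    refine Summable.of_nonneg_of_le (fun l => by positivity) ?_ (hs.comp_injective hφ)
    rintro ⟨⟨a, b⟩, hb⟩
    simp only [φ, Function.comp]
    have hb' : (1 : ℝ) ≤ b := by exact_mod_cast hb
    have hM1 : (1 : ℝ) ≤ ‖![a, b]‖ :=
      le_trans (hb'.trans (le_abs_self _)) (by simpa using EisensteinSeries.abs_le_right_of_norm b a)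
    have hM : ‖![a, b]‖ ^ 2 ≤ (a : ℝ) ^ 2 + (b : ℝ) ^ 2 := by
      rw [EisensteinSeries.norm_eq_max_natAbs]
      rcases max_choice (a.natAbs) (b.natAbs) with h | h <;>
        simp [h, Nat.cast_natAbs] <;> positivity
    generalize ‖![a, b]‖ = M at *
    have hN : (0 : ℝ) < (a : ℝ) ^ 2 + (b : ℝ) ^ 2 := by positivity
    have e : ((a : ℝ) ^ 2 + (b : ℝ) ^ 2) ^ (4 - δ)
        = ((a : ℝ) ^ 2 + (b : ℝ) ^ 2) ^ 2 * ((a : ℝ) ^ 2 + (b : ℝ) ^ 2) ^ (2 - δ) := by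
      rw [← Real.rpow_natCast ((a : ℝ) ^ 2 + (b : ℝ) ^ 2) 2, ← Real.rpow_add hN]
      congr 1; push_cast; ring
    have e2 : M ^ (2 * (2 - δ)) ≤ ((a : ℝ) ^ 2 + (b : ℝ) ^ 2) ^ (2 - δ) := by
      rw [Real.rpow_mul (by linarith)]
      refine Real.rpow_le_rpow (by positivity) ?_ (by linarith)
      exact_mod_cast hM
    have hp : 0 < M ^ (2 * (2 - δ)) := Real.rpow_pos_of_pos (by linarith) _
    have hq := Real.rpow_pos_of_pos hN (2 - δ)
    rw [e]
    first
    | rw [Real.rpow_neg (by linarith), ← one_div]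
    | skip
    refine le_trans ?_ (one_div_le_one_div_of_le hp e2)
    rw [div_le_div_iff₀ (by positivity) hq, one_mul]
    refine mul_le_mul_of_nonneg_right ?_ hq.le
    nlinarith [sq_nonneg (a : ℝ), sq_nonneg (b : ℝ), mul_nonneg (sq_nonneg (a : ℝ)) (sq_nonneg (b : ℝ)), sq_nonneg ((a : ℝ)^2), sq_nonneg ((b : ℝ)^2)]
end

section
/- Key quadratic-form estimate (from the proof of Lemma 3.1): There exists a constant C > 0 such that for every m = (m₁,m₂) ∈ Λ, ∑_{l=(j,k) ∈ Λ, l ≠ m} (j m₂ − k m₁)² · ( 1/(j²+k²) − 1/((m₁−j)²+(m₂−k)²) )² ≤ C (m₁²+m₂²)². (Here j m₂ − k m₁ = l^⊥·m = l^⊥·(m−l) with l^⊥ = (−k,j).) -/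
lemma aux_g : Summable (fun x : ℤ => 1 / (1 + (x:ℝ)^2)) := by
  have h : Summable (fun x : ℤ => 1 / (x:ℝ)^2) := Real.summable_one_div_int_pow.mpr (by norm_num)
  refine Summable.of_norm_bounded_eventually h ?_
  have : ({0}ᶜ : Set ℤ) ∈ Filter.cofinite := (Set.finite_singleton (0:ℤ)).compl_mem_cofinite
  filter_upwards [this] with x hx
  have hx0 : (x:ℝ) ≠ 0 := by exact_mod_cast hx
  have : 0 < (x:ℝ)^2 := by positivity
  rw [Real.norm_of_nonneg (by positivity)]
  exact one_div_le_one_div_of_le this (by linarith)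

noncomputable def auxG (l : ℤ × ℤ) : ℝ := (1 / (1 + (l.1:ℝ)^2)) * (1 / (1 + (l.2:ℝ)^2))

lemma auxG_nonneg (l : ℤ × ℤ) : 0 ≤ auxG l := by unfold auxG; positivity

lemma auxG_summable : Summable auxG :=
  aux_g.mul_of_nonneg aux_g (fun x => by positivity) (fun x => by positivity)

lemma aux_ge (l : ℤ × ℤ) (h : l ≠ 0) : (1:ℝ) ≤ (l.1:ℝ)^2 + (l.2:ℝ)^2 := by
  have : (1:ℤ) ≤ l.1^2 + l.2^2 := by
    by_contra hc
    have h1 : l.1^2 = 0 := by nlinarith [sq_nonneg l.1, sq_nonneg l.2]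
    have h2 : l.2^2 = 0 := by nlinarith [sq_nonneg l.1, sq_nonneg l.2]
    exact h (Prod.ext (by simpa using h1) (by simpa using h2))
  exact_mod_cast this

lemma aux_le (l : ℤ × ℤ) (h : l ≠ 0) : 1 / ((l.1:ℝ)^2 + (l.2:ℝ)^2)^2 ≤ 4 * auxG l := by
  have h1 := aux_ge l h
  unfold auxG
  rw [div_mul_div_comm, mul_one, mul_one_div]
  rw [div_le_div_iff₀ (by positivity) (by positivity)]
  nlinarith [sq_nonneg (l.1:ℝ), sq_nonneg (l.2:ℝ), mul_nonneg (sq_nonneg (l.1:ℝ)) (sq_nonneg (l.2:ℝ)), sq_nonneg ((l.1:ℝ)^2), sq_nonneg ((l.2:ℝ)^2)]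

lemma aux_pt (j k p q : ℝ) (ha : 1 ≤ j^2+k^2) (hb : 1 ≤ (p-j)^2+(q-k)^2) :
    (j*q-k*p)^2 * (1/(j^2+k^2) - 1/((p-j)^2+(q-k)^2))^2 ≤
      2 * (p^2+q^2)^2 * (1/(j^2+k^2)^2 + 1/((p-j)^2+(q-k)^2)^2) := by
  have e1 : (j*q-k*p)^2 ≤ (p^2+q^2) * (j^2+k^2) := by nlinarith [sq_nonneg (j*p+k*q)]
  have e2 : (j*q-k*p)^2 ≤ (p^2+q^2) * ((p-j)^2+(q-k)^2) := by
    nlinarith [sq_nonneg ((p-j)*p+(q-k)*q)]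
  have e3 : (((p-j)^2+(q-k)^2) - (j^2+k^2))^2 ≤
      2 * (p^2+q^2) * ((j^2+k^2) + ((p-j)^2+(q-k)^2)) := by
    have h1 : (((p-j)^2+(q-k)^2) - (j^2+k^2))^2 ≤ ((p-2*j)^2+(q-2*k)^2) * (p^2+q^2) := by
      nlinarith [sq_nonneg ((p-2*j)*q-(q-2*k)*p)]
    have h2 : ((p-2*j)^2+(q-2*k)^2) ≤ 2 * ((j^2+k^2) + ((p-j)^2+(q-k)^2)) := by
      nlinarith [sq_nonneg p, sq_nonneg q]
    nlinarith [mul_le_mul_of_nonneg_right h2 (by positivity : 0 ≤ p^2+q^2)]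
  generalize (j*q-k*p)^2 = X at *
  have hM : 0 ≤ p^2+q^2 := by positivity
  generalize p^2+q^2 = M at *
  generalize (p-j)^2+(q-k)^2 = b at *
  generalize j^2+k^2 = a at *
  have ha0 : 0 < a := by linarith
  have hb0 : 0 < b := by linarith
  by_cases hX : 0 ≤ X
  swap
  · refine le_trans (mul_nonpos_of_nonpos_of_nonneg (by linarith) (sq_nonneg _)) (by positivity)
  have key : X * (b-a)^2 ≤ 4 * M^2 * (a*b) := by
    calc X * (b-a)^2 ≤ X * (2*M*(a+b)) := mul_le_mul_of_nonneg_left e3 hX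
      _ = 2*M*(X*a + X*b) := by ring
      _ ≤ 2*M*((M*b)*a + (M*a)*b) := by gcongr
      _ = _ := by ring
  have : X * (1/a-1/b)^2 = X * (b-a)^2 / (a^2*b^2) := by field_simp
  have h2 : 2*M^2*(1/a^2+1/b^2) = 2*M^2*(a^2+b^2)/(a^2*b^2) := by field_simp; ring
  rw [this, h2]
  refine div_le_div_of_nonneg_right ?_ (by positivity)
  nlinarith [mul_nonneg (sq_nonneg M) (sq_nonneg (a-b))]


/-- **Key quadratic-form estimate** (from the proof of Lemma 3.1). There is a constant `C > 0`
such that for every `m = (m₁,m₂) ∈ Λ = ℤ×(ℕ∖{0})`,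
`∑_{l=(j,k)∈Λ, l≠m} (j m₂ − k m₁)² (1/(j²+k²) − 1/((m₁−j)²+(m₂−k)²))² ≤ C (m₁²+m₂²)²`. -/
theorem key_quadratic_form_estimate :
    ∃ C : ℝ, 0 < C ∧ ∀ m : ℤ × ℤ, 1 ≤ m.2 →
      Summable (fun l : {l : ℤ × ℤ // 1 ≤ l.2 ∧ l ≠ m} =>
        ((l.1.1 : ℝ) * (m.2 : ℝ) - (l.1.2 : ℝ) * (m.1 : ℝ))^2 *
          (1 / ((l.1.1 : ℝ)^2 + (l.1.2 : ℝ)^2)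
            - 1 / (((m.1 : ℝ) - (l.1.1 : ℝ))^2 + ((m.2 : ℝ) - (l.1.2 : ℝ))^2))^2) ∧
      ∑' l : {l : ℤ × ℤ // 1 ≤ l.2 ∧ l ≠ m},
          ((l.1.1 : ℝ) * (m.2 : ℝ) - (l.1.2 : ℝ) * (m.1 : ℝ))^2 *
            (1 / ((l.1.1 : ℝ)^2 + (l.1.2 : ℝ)^2)
              - 1 / (((m.1 : ℝ) - (l.1.1 : ℝ))^2 + ((m.2 : ℝ) - (l.1.2 : ℝ))^2))^2
        ≤ C * ((m.1 : ℝ)^2 + (m.2 : ℝ)^2)^2 := by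
  have hS : 0 ≤ ∑' l, auxG l := tsum_nonneg auxG_nonneg
  refine ⟨16 * (∑' l, auxG l) + 1, by positivity, fun m hm => ?_⟩
  have s1 : Summable (fun l : {l : ℤ × ℤ // 1 ≤ l.2 ∧ l ≠ m} => auxG l.1) :=
    auxG_summable.comp_injective Subtype.val_injective
  have inj : Function.Injective (fun l : {l : ℤ × ℤ // 1 ≤ l.2 ∧ l ≠ m} => m - l.1) :=
    fun x y h => Subtype.ext (sub_right_injective h)
  have s2 : Summable (fun l : {l : ℤ × ℤ // 1 ≤ l.2 ∧ l ≠ m} => auxG (m - l.1)) :=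
    auxG_summable.comp_injective inj
  have t1 : ∑' l : {l : ℤ × ℤ // 1 ≤ l.2 ∧ l ≠ m}, auxG l.1 ≤ ∑' l, auxG l :=
    tsum_comp_le_tsum_of_inj auxG_summable auxG_nonneg Subtype.val_injective
  have t2 : ∑' l : {l : ℤ × ℤ // 1 ≤ l.2 ∧ l ≠ m}, auxG (m - l.1) ≤ ∑' l, auxG l :=
    tsum_comp_le_tsum_of_inj auxG_summable auxG_nonneg inj
  have s3 := (s1.add s2).mul_left (8 * ((m.1 : ℝ)^2 + (m.2 : ℝ)^2)^2)
  have bd : ∀ l : {l : ℤ × ℤ // 1 ≤ l.2 ∧ l ≠ m},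
      ((l.1.1 : ℝ) * (m.2 : ℝ) - (l.1.2 : ℝ) * (m.1 : ℝ))^2 *
          (1 / ((l.1.1 : ℝ)^2 + (l.1.2 : ℝ)^2)
            - 1 / (((m.1 : ℝ) - (l.1.1 : ℝ))^2 + ((m.2 : ℝ) - (l.1.2 : ℝ))^2))^2 ≤
      8 * ((m.1 : ℝ)^2 + (m.2 : ℝ)^2)^2 * (auxG l.1 + auxG (m - l.1)) := by
    rintro ⟨l, hl, hlm⟩
    have hl0 : l ≠ 0 := by rintro rfl; simp at hl
    have hml : m - l ≠ 0 := sub_ne_zero.mpr (Ne.symm hlm)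
    have a1 := aux_ge l hl0
    have a2 := aux_ge _ hml
    have b1 := aux_le l hl0
    have b2 := aux_le _ hml
    simp only [Prod.fst_sub, Prod.snd_sub, Int.cast_sub] at a2 b2
    refine (aux_pt _ _ _ _ a1 a2).trans ?_
    calc _ ≤ 2 * ((m.1 : ℝ)^2 + (m.2 : ℝ)^2)^2 * (4 * auxG l + 4 * auxG (m - l)) := by gcongr
      _ = _ := by ring
  have s := Summable.of_nonneg_of_le (fun l => by positivity) bd s3
  refine ⟨s, (s.tsum_le_tsum bd s3).trans ?_⟩
  rw [tsum_mul_left, s1.tsum_add s2]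
  have : 0 ≤ ((m.1 : ℝ)^2 + (m.2 : ℝ)^2)^2 := by positivity
  nlinarith [mul_le_mul_of_nonneg_left (add_le_add t1 t2) this]
end

section
/- Convergence of double Gaussian series (Proposition 3.3): Let I be a countable set and (g_l)_{l∈I} a family of independent centered real Gaussian random variables on a probability space (Ω,ℱ,P), with variances Var(g_l) = σ_l² ∈ (0,∞). Let H : I×I → ℝ be symmetric with ∑_{l,l'} H_{l,l'}² σ_l² σ_{l'}² < ∞, and let (Hⁿ)_{n∈ℕ} be symmetric functions I×I → ℝ such that: (i) ∑_{l,l'} |Hⁿ_{l,l'}| σ_l σ_{l'} < ∞ for each n (so that Xₙ := ∑_{l,l'} Hⁿ_{l,l'} g_l g_{l'} converges absolutely in L²(P)); (ii) ∑_{l} Hⁿ_{l,l} σ_l² → 0 as n → ∞; (iii) ∑_{l,l'} (Hⁿ_{l,l'} − H_{l,l'})² σ_l² σ_{l'}² → 0 as n → ∞. Then the sequence (Xₙ) converges in L²(P). Moreover the limit does not depend on the approximating sequence: if (Kⁿ) is another sequence satisfying (i)–(iii) for the same H, then lim Xₙ = lim ∑_{l,l'} Kⁿ_{l,l'} g_l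 g_{l'} in L²(P). -/
open MeasureTheory ProbabilityTheory Filter

lemma gauss_moment4 (v : NNReal) : ∫ x, x ^ 4 ∂(gaussianReal 0 v) = 3 * (v : ℝ) ^ 2 := by
  have h0 : ∫ x, x ^ 4 ∂(gaussianReal 0 v)
      = iteratedDeriv 4 (mgf (fun x ↦ x) (gaussianReal 0 v)) 0 := by
    rw [iteratedDeriv_mgf_zero] <;> simp
  rw [h0, mgf_fun_id_gaussianReal]
  simp only [zero_mul, zero_add]
  have key : ∀ (p p' : ℝ → ℝ), (∀ t, HasDerivAt p (p' t) t) →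
      deriv (fun t ↦ p t * Real.exp (v * t ^ 2 / 2))
        = fun t ↦ (p' t + p t * (v * t)) * Real.exp (v * t ^ 2 / 2) := by
    intro p p' hp
    ext t
    have h1 : HasDerivAt (fun t : ℝ ↦ (v : ℝ) * t ^ 2 / 2) (v * t) t := by
      have := ((hasDerivAt_pow 2 t).const_mul (v : ℝ)).div_const 2
      convert! this using 1
      simp; ring
    have := (hp t).mul h1.exp
    rw [show (fun t ↦ p t * Real.exp (v * t ^ 2 / 2)) =
      p * (fun t : ℝ ↦ Real.exp (v * t ^ 2 / 2)) from rfl, this.deriv]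
    ring
  have k1 := key (fun _ => 1) (fun _ => 0) (fun t => hasDerivAt_const t 1)
  simp only [one_mul, zero_add] at k1
  have k2 := key (fun t => v * t) (fun _ => v) (fun t => by
    simpa using (hasDerivAt_id t).const_mul (v : ℝ))
  have k3 := key (fun t => v + v * t * (v * t)) (fun t => 2 * v ^ 2 * t) (fun t => by
    have := ((hasDerivAt_pow 2 t).const_mul ((v : ℝ) ^ 2)).const_add (v : ℝ)
    convert! this using 1
    · ext; ring
    · simp; ring)
  have k4 := key (fun t => 2 * v ^ 2 * t + (v + v * t * (v * t)) * (v * t))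
    (fun t => 3 * v ^ 2 + 3 * v ^ 3 * t ^ 2) (fun t => by
    have := ((hasDerivAt_id t).const_mul (3 * (v : ℝ) ^ 2)).add
      ((hasDerivAt_pow 3 t).const_mul ((v : ℝ) ^ 3))
    convert! this using 1
    · ext; simp; try ring
    · simp; ring)
  rw [iteratedDeriv_succ, iteratedDeriv_succ, iteratedDeriv_succ, iteratedDeriv_one, k1, k2, k3, k4]
  simp

lemma gauss_moment2 (v : NNReal) : ∫ x, x ^ 2 ∂(gaussianReal 0 v) = (v : ℝ) := by
  have h := variance_fun_id_gaussianReal (μ := 0) (v := v)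
  rw [variance_eq_integral measurable_id'.aemeasurable] at h
  simpa using h

/-- Membership in all `L^p`, `p < ∞`. -/
def AllLp {Ω : Type*} [MeasurableSpace Ω] (P : Measure Ω) (f : Ω → ℝ) : Prop :=
  ∀ p : ENNReal, p ≠ ⊤ → MemLp f p P

namespace AllLp
variable {Ω : Type*} [MeasurableSpace Ω] {P : Measure Ω} {f g : Ω → ℝ}

lemma add (hf : AllLp P f) (hg : AllLp P g) : AllLp P (fun ω => f ω + g ω) :=
  fun p hp => (hf p hp).add (hg p hp)

lemma sub (hf : AllLp P f) (hg : AllLp P g) : AllLp P (fun ω => f ω - g ω) :=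
  fun p hp => (hf p hp).sub (hg p hp)

lemma const [IsProbabilityMeasure P] (c : ℝ) : AllLp P (fun _ => c) := fun _ _ => memLp_const c

lemma mul (hf : AllLp P f) (hg : AllLp P g) : AllLp P (fun ω => f ω * g ω) := by
  intro p hp
  have h2 : 2 * p ≠ ⊤ := ENNReal.mul_ne_top (by simp) hp
  have : ENNReal.HolderTriple (2 * p) (2 * p) p := ⟨by
    rw [ENNReal.mul_inv (by simp) (by simp), ← add_mul, ENNReal.inv_two_add_inv_two, one_mul]⟩
  exact (hg _ h2).mul' (hf _ h2)

lemma pow [IsProbabilityMeasure P] (hf : AllLp P f) (n : ℕ) : AllLp P (fun ω => f ω ^ n) := by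
  induction n with
  | zero => simpa using const (P := P) 1
  | succ n ih => simpa [pow_succ] using ih.mul hf

lemma sum {ι : Type*} (s : Finset ι) {F : ι → Ω → ℝ} (h : ∀ i ∈ s, AllLp P (F i)) :
    AllLp P (fun ω => ∑ i ∈ s, F i ω) :=
  fun p hp => memLp_finsetSum s (fun i hi => h i hi p hp)

lemma int (hf : AllLp P f) : Integrable f P := memLp_one_iff_integrable.1 (hf 1 (by simp))
end AllLp

lemma chaos_step {Ω : Type*} [MeasurableSpace Ω] (P : Measure Ω) [IsProbabilityMeasure P]
    (G Y L : Ω → ℝ) (v d : ℝ) (hG : AllLp P G) (hY : AllLp P Y) (hL : AllLp P L)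
    (hind : IndepFun G (fun ω => (Y ω, L ω)) P)
    (h1 : ∫ ω, G ω ∂P = 0) (h2 : ∫ ω, G ω ^ 2 ∂P = v) (h4 : ∫ ω, G ω ^ 4 ∂P = 3 * v ^ 2)
    (hL0 : ∫ ω, L ω ∂P = 0) :
    ∫ ω, (Y ω + 2 * (G ω * L ω) + d * (G ω ^ 2 - v)) ^ 2 ∂P
      = ∫ ω, Y ω ^ 2 ∂P + 4 * v * ∫ ω, L ω ^ 2 ∂P + 2 * d ^ 2 * v ^ 2 := by
  have prod : ∀ (a : ℝ → ℝ) (b : ℝ × ℝ → ℝ), Measurable a → Measurable b →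
      AllLp P (fun ω => a (G ω)) → AllLp P (fun ω => b (Y ω, L ω)) →
      Integrable (fun ω => a (G ω) * b (Y ω, L ω)) P ∧
      ∫ ω, a (G ω) * b (Y ω, L ω) ∂P = (∫ ω, a (G ω) ∂P) * ∫ ω, b (Y ω, L ω) ∂P := by
    intro a b ha hb hA hB
    refine ⟨(hA.mul hB).int, ?_⟩
    exact (hind.comp ha hb).integral_fun_mul_eq_mul_integral hA.int.1 hB.int.1
  have c := AllLp.const (P := P)
  obtain ⟨i1, e1⟩ := prod (fun x => x ^ 2) (fun p => p.2 ^ 2) (by fun_prop) (by fun_prop)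
    (hG.pow 2) (hL.pow 2)
  obtain ⟨i2, e2⟩ := prod (fun x => x) (fun p => p.1 * p.2) (by fun_prop) (by fun_prop)
    hG (hY.mul hL)
  obtain ⟨i3, e3⟩ := prod (fun x => x ^ 2 - v) (fun p => p.1) (by fun_prop) (by fun_prop)
    ((hG.pow 2).sub (c v)) hY
  obtain ⟨i4, e4⟩ := prod (fun x => x ^ 3 - v * x) (fun p => p.2) (by fun_prop) (by fun_prop)
    ((hG.pow 3).sub ((c v).mul hG)) hL
  have i5 := (((hG.pow 2).sub (c v)).pow 2).int
  have e5 : ∫ ω, (G ω ^ 2 - v) ^ 2 ∂P = 2 * v ^ 2 := by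
    have : ∀ ω, (G ω ^ 2 - v) ^ 2 = G ω ^ 4 - 2 * v * G ω ^ 2 + v ^ 2 := fun ω => by ring
    simp_rw [this]
    rw [integral_add (by exact ((hG.pow 4).int.sub ((hG.pow 2).int.const_mul _))) (by fun_prop),
      integral_sub (hG.pow 4).int ((hG.pow 2).int.const_mul _), integral_const_mul, h2, h4]
    simp; ring
  have e3' : ∫ ω, (G ω ^ 2 - v) ∂P = 0 := by
    rw [integral_sub (hG.pow 2).int (by fun_prop), h2]; simp
  have i0 := (hY.pow 2).int
  rw [h2] at e1
  rw [h1, zero_mul] at e2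
  rw [e3', zero_mul] at e3
  rw [hL0, mul_zero] at e4
  have expand : ∀ ω, (Y ω + 2 * (G ω * L ω) + d * (G ω ^ 2 - v)) ^ 2
      = Y ω ^ 2 + (4 * (G ω ^ 2 * L ω ^ 2) + (d ^ 2 * (G ω ^ 2 - v) ^ 2 + (4 * (G ω * (Y ω * L ω))
        + (2 * d * ((G ω ^ 2 - v) * Y ω) + 4 * d * ((G ω ^ 3 - v * G ω) * L ω))))) := fun ω => by
    ring
  dsimp only at i1 i2 i3 i4 e1 e2 e3 e4
  have j4 := i4.const_mul (4 * d)
  have j3 := (i3.const_mul (2 * d))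
  have j2 := (i2.const_mul 4)
  have j5 := (i5.const_mul (d ^ 2))
  have j1 := (i1.const_mul 4)
  have k3 := j3.add j4
  have k2 := j2.add k3
  have k5 := j5.add k2
  have k1 := j1.add k5
  dsimp only [Pi.add_def] at k1 k2 k3 k5
  simp_rw [expand]
  rw [integral_add i0 k1, integral_add j1 k5, integral_add j5 k2, integral_add j2 k3,
    integral_add j3 j4]
  simp only [integral_const_mul]
  rw [e1, e2, e3, e4, e5]
  ring

set_option linter.unusedSectionVars false

/-- An independent centered Gaussian family. -/
structure GaussFam {I Ω : Type*} [MeasurableSpace Ω] (P : Measure Ω)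
    (g : I → Ω → ℝ) (v : I → NNReal) : Prop where
  meas : ∀ l, Measurable (g l)
  law : ∀ l, P.map (g l) = gaussianReal 0 (v l)
  indep : iIndepFun g P

namespace GaussFam
variable {I Ω : Type*} [MeasurableSpace Ω] {P : Measure Ω} [IsProbabilityMeasure P]
    {g : I → Ω → ℝ} {v : I → NNReal}

lemma allLp (h : GaussFam P g v) (l : I) : AllLp P (g l) := by
  intro p hp
  have := memLp_id_gaussianReal' (μ := 0) (v := v l) p hp
  rw [← h.law l] at this
  exact this.comp_of_map (h.meas l).aemeasurable

lemma integral_comp (h : GaussFam P g v) (l : I) (f : ℝ → ℝ) (hf : Measurable f) :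
    ∫ ω, f (g l ω) ∂P = ∫ x, f x ∂(gaussianReal 0 (v l)) := by
  rw [← h.law l, integral_map (h.meas l).aemeasurable hf.aestronglyMeasurable]

lemma m1 (h : GaussFam P g v) (l : I) : ∫ ω, g l ω ∂P = 0 := by
  rw [h.integral_comp l (fun x => x) (by fun_prop), integral_id_gaussianReal]

lemma m2 (h : GaussFam P g v) (l : I) : ∫ ω, g l ω ^ 2 ∂P = v l := by
  rw [h.integral_comp l (fun x => x ^ 2) (by fun_prop), gauss_moment2]

lemma m4 (h : GaussFam P g v) (l : I) : ∫ ω, g l ω ^ 4 ∂P = 3 * (v l : ℝ) ^ 2 := by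
  rw [h.integral_comp l (fun x => x ^ 4) (by fun_prop), gauss_moment4]

lemma indep_finset (h : GaussFam P g v) (a : I) (s : Finset I) (ha : a ∉ s)
    {β : Type*} [MeasurableSpace β] (φ : (s → ℝ) → β) (hφ : Measurable φ) :
    IndepFun (g a) (fun ω => φ (fun i : s => g i ω)) P := by
  have := h.indep.indepFun_finset {a} s (by simpa using ha) h.meas
  exact this.comp (φ := fun x : (({a} : Finset I) → ℝ) => x ⟨a, by simp⟩)
    (measurable_pi_apply _) hφ

lemma lin (h : GaussFam P g v) (c : I → ℝ) (s : Finset I) :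
    AllLp P (fun ω => ∑ l ∈ s, c l * g l ω) :=
  AllLp.sum s fun i _ => (AllLp.const _).mul (h.allLp i)

lemma lin_int (h : GaussFam P g v) (c : I → ℝ) (s : Finset I) :
    ∫ ω, ∑ l ∈ s, c l * g l ω ∂P = 0 := by
  rw [integral_finsetSum _ fun i _ => ((h.allLp i).int.const_mul _)]
  simp [integral_const_mul, h.m1]

lemma lin_sq (h : GaussFam P g v) (c : I → ℝ) (s : Finset I) :
    ∫ ω, (∑ l ∈ s, c l * g l ω) ^ 2 ∂P = ∑ l ∈ s, c l ^ 2 * v l := by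
  classical
  induction s using Finset.induction_on with
  | empty => simp
  | insert a s ha ih =>
    have hi := h.indep_finset a s ha (fun x => ∑ i : s, c i * x i) (by fun_prop)
    have hr : (fun ω => ∑ i : s, c i * g i ω) = fun ω => ∑ l ∈ s, c l * g l ω := by
      ext ω; exact Finset.sum_coe_sort s (fun i => c i * g i ω)
    dsimp only at hi
    rw [hr] at hi
    have hL := h.lin c s
    have e := hi.integral_fun_mul_eq_mul_integral (h.allLp a).int.1 hL.int.1
    rw [h.m1, zero_mul] at e
    have i1 := ((h.allLp a).pow 2).int.const_mul (c a ^ 2)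
    have i2 := ((h.allLp a).mul hL).int.const_mul (2 * c a)
    have i3 := (hL.pow 2).int
    have k := i2.add i3
    dsimp only [Pi.add_def] at k
    have expand : ∀ ω, (∑ l ∈ insert a s, c l * g l ω) ^ 2
        = c a ^ 2 * g a ω ^ 2 + (2 * c a * (g a ω * ∑ l ∈ s, c l * g l ω)
          + (∑ l ∈ s, c l * g l ω) ^ 2) := fun ω => by
      rw [Finset.sum_insert ha]; ring
    simp_rw [expand]
    rw [integral_add i1 k, integral_add i2 i3, integral_const_mul, integral_const_mul, e, ih, h.m2,
      Finset.sum_insert ha]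
    ring

lemma quad (h : GaussFam P g v) (D : I → I → ℝ) (s : Finset I) :
    AllLp P (fun ω => ∑ l ∈ s, ∑ l' ∈ s, D l l' * g l ω * g l' ω) :=
  AllLp.sum s fun i _ => AllLp.sum s fun j _ =>
    ((AllLp.const _).mul (h.allLp i)).mul (h.allLp j)

lemma quad_sq (h : GaussFam P g v) (D : I → I → ℝ) (hD : ∀ l l', D l l' = D l' l)
    (s : Finset I) :
    ∫ ω, (∑ l ∈ s, ∑ l' ∈ s, D l l' * g l ω * g l' ω - ∑ l ∈ s, D l l * v l) ^ 2 ∂P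
      = 2 * ∑ l ∈ s, ∑ l' ∈ s, D l l' ^ 2 * v l * v l' := by
  classical
  induction s using Finset.induction_on with
  | empty => simp
  | insert a s ha ih =>
    have hi := h.indep_finset a s ha (fun x => (∑ i : s, ∑ j : s, D i j * x i * x j
      - ∑ l ∈ s, D l l * v l, ∑ i : s, D a i * x i)) (by fun_prop)
    have hr : (fun ω => ((∑ i : s, ∑ j : s, D i j * g i ω * g j ω
      - ∑ l ∈ s, D l l * v l, ∑ i : s, D a i * g i ω) : ℝ × ℝ)) =
       fun ω => (∑ l ∈ s, ∑ l' ∈ s, D l l' * g l ω * g l' ω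
      - ∑ l ∈ s, D l l * v l, ∑ l ∈ s, D a l * g l ω) := by
      ext ω
      · dsimp only
        congr 1
        rw [← Finset.sum_coe_sort s]
        refine Finset.sum_congr rfl fun i _ => ?_
        rw [← Finset.sum_coe_sort s]
      · exact Finset.sum_coe_sort s (fun i => D a i * g i ω)
    dsimp only at hi
    rw [hr] at hi
    have := chaos_step P (g a) _ _ (v a) (D a a) (h.allLp a) ((h.quad D s).sub (AllLp.const _))
      (h.lin (D a) s) hi (h.m1 a) (h.m2 a) (h.m4 a) (h.lin_int _ s)
    rw [ih, h.lin_sq] at this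
    have expand : ∀ ω, ∑ l ∈ insert a s, ∑ l' ∈ insert a s, D l l' * g l ω * g l' ω
        - ∑ l ∈ insert a s, D l l * v l = (∑ l ∈ s, ∑ l' ∈ s, D l l' * g l ω * g l' ω
      - ∑ l ∈ s, D l l * v l) + 2 * (g a ω * ∑ l ∈ s, D a l * g l ω)
        + D a a * (g a ω ^ 2 - v a) := fun ω => by
      simp only [Finset.sum_insert ha, Finset.sum_add_distrib]
      have e1 : ∑ l ∈ s, D l a * g l ω * g a ω = g a ω * ∑ l ∈ s, D a l * g l ω := by
        rw [Finset.mul_sum]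
        exact Finset.sum_congr rfl fun i _ => by rw [hD i a]; ring
      have e2 : ∑ l ∈ s, D a l * g a ω * g l ω = g a ω * ∑ l ∈ s, D a l * g l ω := by
        rw [Finset.mul_sum]
        exact Finset.sum_congr rfl fun i _ => by ring
      rw [e1, e2]; ring
    simp_rw [expand]
    rw [this]
    simp only [Finset.sum_insert ha, Finset.sum_add_distrib]
    have e1 : ∑ l ∈ s, D l a ^ 2 * v l * v a = v a * ∑ l ∈ s, D a l ^ 2 * (v l : ℝ) := by
      rw [Finset.mul_sum]
      exact Finset.sum_congr rfl fun i _ => by rw [hD i a]; ring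
    have e2 : ∑ l ∈ s, D a l ^ 2 * v a * v l = v a * ∑ l ∈ s, D a l ^ 2 * (v l : ℝ) := by
      rw [Finset.mul_sum]
      exact Finset.sum_congr rfl fun i _ => by ring
    rw [e1, e2]; ring

/-- absolute summability of a kernel against `σ σ'` -/
def AbsK (v : I → NNReal) (D : I → I → ℝ) : Prop :=
  Summable fun p : I × I => |D p.1 p.2| * Real.sqrt (v p.1) * Real.sqrt (v p.2)

lemma absK_sub {A B : I → I → ℝ} (hA : AbsK v A) (hB : AbsK v B) :
    AbsK v (fun l l' => A l l' - B l l') := by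
  refine Summable.of_nonneg_of_le (fun p => by positivity) (fun p => ?_) (Summable.add hA hB)
  rw [← add_mul, ← add_mul]
  gcongr
  exact abs_sub _ _

lemma absK_diag {A : I → I → ℝ} (hA : AbsK v A) : Summable fun l => A l l * (v l : ℝ) := by
  have h1 := Summable.comp_injective hA (i := fun l : I => (l, l)) (fun a b hab => by simpa using hab)
  refine Summable.of_norm (h1.congr fun l => ?_)
  simp only [Function.comp, Real.norm_eq_abs, abs_mul, NNReal.abs_eq]
  rw [mul_assoc, Real.mul_self_sqrt (by positivity)]

lemma absK_sq {A : I → I → ℝ} (hA : AbsK v A) :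
    Summable fun p : I × I => (A p.1 p.2) ^ 2 * (v p.1 : ℝ) * (v p.2 : ℝ) := by
  have hA' : Summable fun p : I × I =>
    |A p.1 p.2| * Real.sqrt (v p.1) * Real.sqrt (v p.2) := hA
  have := hA'.mul_of_nonneg hA' (fun p => by positivity) (fun p => by positivity)
  have h1 := Summable.comp_injective this (i := fun l : I × I => (l, l))
    (fun a b hab => by simpa using hab)
  refine h1.congr fun p => ?_
  have a1 := Real.mul_self_sqrt (v p.1).coe_nonneg
  have a2 := Real.mul_self_sqrt (v p.2).coe_nonneg
  have a3 := abs_mul_abs_self (A p.1 p.2)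
  simp only [Function.comp]
  calc _ = (|A p.1 p.2| * |A p.1 p.2|) * (Real.sqrt (v p.1) * Real.sqrt (v p.1))
        * (Real.sqrt (v p.2) * Real.sqrt (v p.2)) := by ring
    _ = _ := by rw [a1, a2, a3]; ring

lemma lintegral_mul_le (h : GaussFam P g v) (l l' : I) :
    ∫⁻ ω, ‖g l ω * g l' ω‖ₑ ∂P ≤ ENNReal.ofReal (Real.sqrt (v l) * Real.sqrt (v l')) := by
  have h2 : ∀ l, eLpNorm (g l) 2 P = ENNReal.ofReal (Real.sqrt (v l)) := by
    intro l
    rw [(h.allLp l 2 (by simp)).eLpNorm_eq_integral_rpow_norm (by simp) (by simp)]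
    simp [h.m2, Real.sqrt_eq_rpow]
  have := eLpNorm_smul_le_mul_eLpNorm (p := 2) (q := 2) (r := 1) (h.allLp l' 2 (by simp)).1
    (h.allLp l 2 (by simp)).1
  rw [h2, h2, ← ENNReal.ofReal_mul (by positivity), eLpNorm_one_eq_lintegral_enorm] at this
  exact this

lemma ae_summable (h : GaussFam P g v) [Countable I] {D : I → I → ℝ} (hD : AbsK v D) :
    ∀ᵐ ω ∂P, Summable fun p : I × I => D p.1 p.2 * g p.1 ω * g p.2 ω := by
  have key : ∫⁻ ω, ∑' p : I × I, ‖D p.1 p.2 * g p.1 ω * g p.2 ω‖ₑ ∂P ≠ ⊤ := by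
    have hm := h.meas
    rw [lintegral_tsum (fun p => by fun_prop)]
    refine ne_top_of_le_ne_top hD.tsum_ofReal_ne_top (ENNReal.tsum_le_tsum fun p => ?_)
    simp_rw [mul_assoc, enorm_mul (D p.1 p.2)]
    rw [lintegral_const_mul _ (by fun_prop), ENNReal.ofReal_mul (by positivity),
      ← Real.enorm_eq_ofReal_abs]
    gcongr
    exact h.lintegral_mul_le _ _
  have hm := h.meas
  have hae := ae_lt_top' (AEMeasurable.tsum (fun p => by fun_prop)) key
  filter_upwards [hae] with ω hω
  refine Summable.of_norm ?_
  have := ENNReal.summable_toReal hω.ne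
  simpa using this

/-- Centered double series. -/
noncomputable def Q (g : I → Ω → ℝ) (v : I → NNReal) (D : I → I → ℝ) (ω : Ω) : ℝ :=
  (∑' p : I × I, D p.1 p.2 * g p.1 ω * g p.2 ω) - ∑' l, D l l * (v l : ℝ)

lemma Q_key (h : GaussFam P g v) [Countable I] {D : I → I → ℝ} (hs : ∀ l l', D l l' = D l' l)
    (hD : AbsK v D) :
    MemLp (Q g v D) 2 P ∧ eLpNorm (Q g v D) 2 P ≤ ENNReal.ofReal
      (Real.sqrt (2 * ∑' p : I × I, (D p.1 p.2) ^ 2 * (v p.1 : ℝ) * (v p.2 : ℝ))) := by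
  set f : Finset I → Ω → ℝ := fun s ω =>
    ∑ l ∈ s, ∑ l' ∈ s, D l l' * g l ω * g l' ω - ∑ l ∈ s, D l l * (v l : ℝ) with hf
  have hfL : ∀ s, AllLp P (f s) := fun s => (h.quad D s).sub (AllLp.const _)
  have ht : ∀ᵐ ω ∂P, Tendsto (f · ω) atTop (nhds (Q g v D ω)) := by
    filter_upwards [h.ae_summable hD] with ω hω
    have h1 : Tendsto (fun s : Finset I => s ×ˢ s) atTop atTop :=
      tendsto_finsetProd_atTop.comp tendsto_atTop_diagonal
    have h2 := hω.hasSum.comp h1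
    have h3 := (absK_diag hD).hasSum
    refine (h2.sub h3).congr fun s => ?_
    simp [hf, Finset.sum_product]
  have hm : ∀ s, AEStronglyMeasurable (f s) P := fun s => (hfL s).int.1
  have hle : eLpNorm (Q g v D) 2 P ≤ ENNReal.ofReal
      (Real.sqrt (2 * ∑' p : I × I, (D p.1 p.2) ^ 2 * (v p.1 : ℝ) * (v p.2 : ℝ))) := by
    refine Lp.eLpNorm_le_of_ae_tendsto (Eventually.of_forall fun s => ?_) hm ht
    rw [(hfL s 2 (by simp)).eLpNorm_eq_integral_rpow_norm (by simp) (by simp)]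
    simp only [ENNReal.toReal_ofNat, Real.rpow_ofNat, Real.norm_eq_abs, sq_abs]
    rw [h.quad_sq D hs s, Real.sqrt_eq_rpow, one_div]
    refine ENNReal.ofReal_le_ofReal (Real.rpow_le_rpow ?_ ?_ (by norm_num))
    · exact mul_nonneg (by norm_num) (Finset.sum_nonneg fun _ _ => Finset.sum_nonneg fun _ _ => by
        positivity)
    · rw [← Finset.sum_product s s (fun p : I × I => (D p.1 p.2) ^ 2 * (v p.1 : ℝ) * (v p.2 : ℝ))]
      exact mul_le_mul_of_nonneg_left
        ((absK_sq hD).sum_le_tsum _ fun p _ => by positivity) (by norm_num)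
  exact ⟨⟨aestronglyMeasurable_of_tendsto_ae atTop hm ht, hle.trans_lt ENNReal.ofReal_lt_top⟩, hle⟩

lemma Q_sub (h : GaussFam P g v) [Countable I] {A B : I → I → ℝ} (hA : AbsK v A) (hB : AbsK v B) :
    (fun ω => Q g v A ω - Q g v B ω) =ᵐ[P] Q g v (fun l l' => A l l' - B l l') := by
  filter_upwards [h.ae_summable hA, h.ae_summable hB] with ω h1 h2
  have e1 := h1.tsum_sub h2
  have e2 := (absK_diag hA).tsum_sub (absK_diag hB)
  simp only [Q, sub_mul]
  rw [e1, e2]; ring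

lemma Q_dist (h : GaussFam P g v) [Countable I] {A B H : I → I → ℝ}
    (sA : ∀ l l', A l l' = A l' l) (sB : ∀ l l', B l l' = B l' l)
    (hA : AbsK v A) (hB : AbsK v B)
    (hH : Summable fun p : I × I => (H p.1 p.2) ^ 2 * (v p.1 : ℝ) * (v p.2 : ℝ)) :
    eLpNorm (fun ω => Q g v A ω - Q g v B ω) 2 P ≤ ENNReal.ofReal (Real.sqrt (4 * (
      (∑' p : I × I, (A p.1 p.2 - H p.1 p.2) ^ 2 * (v p.1 : ℝ) * (v p.2 : ℝ)) +
      ∑' p : I × I, (B p.1 p.2 - H p.1 p.2) ^ 2 * (v p.1 : ℝ) * (v p.2 : ℝ)))) := by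
  have sd : ∀ {A : I → I → ℝ}, AbsK v A → Summable fun p : I × I =>
      (A p.1 p.2 - H p.1 p.2) ^ 2 * (v p.1 : ℝ) * (v p.2 : ℝ) := by
    intro A hA
    refine Summable.of_nonneg_of_le (fun p => by positivity) (fun p => ?_)
      (((absK_sq hA).add hH).mul_left 2)
    have : (A p.1 p.2 - H p.1 p.2) ^ 2 ≤ 2 * (A p.1 p.2 ^ 2 + H p.1 p.2 ^ 2) := by
      nlinarith [sq_nonneg (A p.1 p.2 + H p.1 p.2)]
    rw [← add_mul, ← add_mul, ← mul_assoc, ← mul_assoc]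
    gcongr
  rw [eLpNorm_congr_ae (h.Q_sub hA hB)]
  have hAB := absK_sub hA hB
  refine (h.Q_key (fun l l' => by rw [sA, sB]) hAB).2.trans ?_
  refine ENNReal.ofReal_le_ofReal (Real.sqrt_le_sqrt ?_)
  rw [← (sd hA).tsum_add (sd hB), show (4 : ℝ) = 2 * 2 by norm_num, mul_assoc 2 2]
  refine mul_le_mul_of_nonneg_left ?_ (by norm_num)
  rw [← tsum_mul_left]
  refine (absK_sq hAB).tsum_le_tsum (fun p => ?_) (((sd hA).add (sd hB)).mul_left 2)
  have : (A p.1 p.2 - B p.1 p.2) ^ 2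
      ≤ 2 * ((A p.1 p.2 - H p.1 p.2) ^ 2 + (B p.1 p.2 - H p.1 p.2) ^ 2) := by
    nlinarith [sq_nonneg ((A p.1 p.2 - H p.1 p.2) + (B p.1 p.2 - H p.1 p.2))]
  rw [← add_mul, ← add_mul, ← mul_assoc, ← mul_assoc]
  gcongr

end GaussFam

/-- **Proposition 3.3 (convergence of double Gaussian series).** Let `(g_l)_{l∈I}` be a
countable family of independent centered real Gaussian random variables with variances
`σ_l² = v l ∈ (0,∞)`. Let `H` be symmetric with `∑_{l,l'} H_{l,l'}² σ_l² σ_{l'}² < ∞` and let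
`(Hⁿ)` be symmetric kernels with (i) `∑_{l,l'} |Hⁿ_{l,l'}| σ_l σ_{l'} < ∞`,
(ii) `∑_l Hⁿ_{l,l} σ_l² → 0` and (iii) `∑_{l,l'} (Hⁿ_{l,l'} − H_{l,l'})² σ_l² σ_{l'}² → 0`.
Then `Xₙ = ∑_{l,l'} Hⁿ_{l,l'} g_l g_{l'}` converges in `L²(P)`, and the limit is the same for
any other approximating sequence `(Kⁿ)` satisfying (i)–(iii). -/
theorem double_gaussian_series_L2_convergence
    {I : Type*} [Countable I] {Ω : Type*} [MeasurableSpace Ω]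
    (P : Measure Ω) [IsProbabilityMeasure P]
    (g : I → Ω → ℝ) (v : I → NNReal)
    (hmeas : ∀ l, Measurable (g l))
    (hv : ∀ l, 0 < v l)
    (hlaw : ∀ l, P.map (g l) = gaussianReal 0 (v l))
    (hindep : iIndepFun g P)
    (H : I → I → ℝ) (hsymm : ∀ l l', H l l' = H l' l)
    (hH : Summable fun p : I × I => (H p.1 p.2)^2 * (v p.1 : ℝ) * (v p.2 : ℝ))
    (Hn : ℕ → I → I → ℝ) (hHnsymm : ∀ n l l', Hn n l l' = Hn n l' l)
    (hHnabs : ∀ n, Summable fun p : I × I =>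
      |Hn n p.1 p.2| * Real.sqrt (v p.1) * Real.sqrt (v p.2))
    (hHndiag : Tendsto (fun n => ∑' l, Hn n l l * (v l : ℝ)) atTop (nhds 0))
    (hHnapprox : Tendsto
      (fun n => ∑' p : I × I, (Hn n p.1 p.2 - H p.1 p.2)^2 * (v p.1 : ℝ) * (v p.2 : ℝ))
      atTop (nhds 0)) :
    ∃ X : Ω → ℝ, MemLp X 2 P ∧
      Tendsto (fun n => eLpNorm
          (fun ω => (∑' p : I × I, Hn n p.1 p.2 * g p.1 ω * g p.2 ω) - X ω) 2 P)
        atTop (nhds 0) ∧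
      ∀ Kn : ℕ → I → I → ℝ, (∀ n l l', Kn n l l' = Kn n l' l) →
        (∀ n, Summable fun p : I × I =>
          |Kn n p.1 p.2| * Real.sqrt (v p.1) * Real.sqrt (v p.2)) →
        Tendsto (fun n => ∑' l, Kn n l l * (v l : ℝ)) atTop (nhds 0) →
        Tendsto
          (fun n => ∑' p : I × I, (Kn n p.1 p.2 - H p.1 p.2)^2 * (v p.1 : ℝ) * (v p.2 : ℝ))
          atTop (nhds 0) →
        Tendsto (fun n => eLpNorm
            (fun ω => (∑' p : I × I, Kn n p.1 p.2 * g p.1 ω * g p.2 ω) - X ω) 2 P)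
          atTop (nhds 0) := by
  have h : GaussFam P g v := ⟨hmeas, hlaw, hindep⟩
  have hK : ∀ n, GaussFam.AbsK v (Hn n) := hHnabs
  set Y : ℕ → Ω → ℝ := fun n => GaussFam.Q g v (Hn n) with hY
  have hYm : ∀ n, MemLp (Y n) 2 P := fun n => (h.Q_key (hHnsymm n) (hK n)).1
  -- limit of the bound
  have lim0 : ∀ {ι : Type} {F : Filter ι} {a b : ι → ℝ}, Tendsto a F (nhds 0) →
      Tendsto b F (nhds 0) →
      Tendsto (fun i => ENNReal.ofReal (Real.sqrt (4 * (a i + b i)))) F (nhds 0) := by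
    intro ι F a b ha hb
    have := ENNReal.tendsto_ofReal (((ha.add hb).const_mul 4).sqrt)
    simpa using this
  have hcau : CauchySeq fun n => (hYm n).toLp (Y n) := by
    rw [Lp.cauchySeq_Lp_iff_cauchySeq_eLpNorm]
    have hb := lim0 (hHnapprox.comp (tendsto_fst (f := atTop) (g := atTop)))
      (hHnapprox.comp (tendsto_snd (f := (atTop : Filter ℕ)) (g := (atTop : Filter ℕ))))
    rw [prod_atTop_atTop_eq] at hb
    refine tendsto_of_tendsto_of_tendsto_of_le_of_le tendsto_const_nhds hb (fun _ => zero_le) ?_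
    intro nm
    dsimp only
    rw [eLpNorm_congr_ae ((hYm nm.1).coeFn_toLp.sub (hYm nm.2).coeFn_toLp)]
    exact h.Q_dist (hHnsymm _) (hHnsymm _) (hK _) (hK _) hH
  obtain ⟨X, hX⟩ := cauchySeq_tendsto_of_complete hcau
  have hX' : Tendsto (fun n => eLpNorm (fun ω => Y n ω - X ω) 2 P) atTop (nhds 0) := by
    rw [Lp.tendsto_Lp_iff_tendsto_eLpNorm'] at hX
    refine hX.congr fun n => ?_
    exact eLpNorm_congr_ae ((hYm n).coeFn_toLp.sub EventuallyEq.rfl)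
  have main : ∀ Kn : ℕ → I → I → ℝ, (∀ n l l', Kn n l l' = Kn n l' l) →
        (∀ n, Summable fun p : I × I =>
          |Kn n p.1 p.2| * Real.sqrt (v p.1) * Real.sqrt (v p.2)) →
        Tendsto (fun n => ∑' l, Kn n l l * (v l : ℝ)) atTop (nhds 0) →
        Tendsto
          (fun n => ∑' p : I × I, (Kn n p.1 p.2 - H p.1 p.2)^2 * (v p.1 : ℝ) * (v p.2 : ℝ))
          atTop (nhds 0) →
        Tendsto (fun n => eLpNorm
            (fun ω => (∑' p : I × I, Kn n p.1 p.2 * g p.1 ω * g p.2 ω) - X ω) 2 P)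
          atTop (nhds 0) := by
    intro Kn ks kabs kdiag kap
    have kK : ∀ n, GaussFam.AbsK v (Kn n) := kabs
    have hZm : ∀ n, MemLp (GaussFam.Q g v (Kn n)) 2 P := fun n => (h.Q_key (ks n) (kK n)).1
    have t1 := lim0 kap hHnapprox
    have t3 : Tendsto (fun n => ‖∑' l, Kn n l l * (v l : ℝ)‖ₑ) atTop (nhds 0) := by
      simpa using kdiag.enorm
    have t := (t1.add hX').add t3
    simp only [add_zero] at t
    refine tendsto_of_tendsto_of_tendsto_of_le_of_le tendsto_const_nhds t (fun _ => zero_le) ?_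
    intro n
    dsimp only
    have m1 : AEStronglyMeasurable (fun ω => GaussFam.Q g v (Kn n) ω - Y n ω) P :=
      (hZm n).1.sub (hYm n).1
    have m2 : AEStronglyMeasurable (fun ω => Y n ω - X ω) P := (hYm n).1.sub (Lp.memLp X).1
    have e : (fun ω => (∑' p : I × I, Kn n p.1 p.2 * g p.1 ω * g p.2 ω) - X ω)
      = (((fun ω => GaussFam.Q g v (Kn n) ω - Y n ω) + fun ω => Y n ω - X ω)
        + fun _ => ∑' l, Kn n l l * (v l : ℝ)) := by
      ext ω
      simp only [Pi.add_apply, GaussFam.Q]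
      ring
    rw [e]
    refine (eLpNorm_add_le (m1.add m2) aestronglyMeasurable_const (by norm_num)).trans ?_
    refine add_le_add ((eLpNorm_add_le m1 m2 (by norm_num)).trans
      (add_le_add (h.Q_dist (ks _) (hHnsymm _) (kK _) (hK _) hH) le_rfl)) ?_
    rw [eLpNorm_const _ (by simp) (IsProbabilityMeasure.ne_zero P)]
    simp
  exact ⟨X, Lp.memLp X, main Hn hHnsymm hHnabs hHndiag hHnapprox, main⟩
end

section
/- Renormalized limit identity (relation between ⋄ and ⊗): Let I be a countable set, (g_l)_{l∈I} independent centered real Gaussian random variables with variances σ_l² ∈ (0,∞), and let (d_n)_{n≥1} be an injective sequence in I. Let H : I×I → ℝ be symmetric with ∑_{l,l'} |H_{l,l'}| σ_l σ_{l'} < ∞, and set S := ∑_{l} H_{l,l} σ_l² (absolutely convergent). Define Hⁿ : I×I → ℝ by Hⁿ_{l,l'} := H_{l,l'} − (S/(n σ_{d_k}²)) if l = l' = d_k for some 1 ≤ k ≤ n, and Hⁿ_{l,l'} := H_{l,l'} otherwise. Then: (a) ∑_{l} Hⁿ_{l,l} σ_l² = 0 for every n; (b) ∑_{l,l'} (Hⁿ_{l,l'}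 − H_{l,l'})² σ_l² σ_{l'}² = S²/n → 0; (c) the random variables Xₙ := ∑_{l,l'} Hⁿ_{l,l'} g_l g_{l'} (absolutely convergent in L²(P)) converge in L²(P) to ∑_{l,l'} H_{l,l'} g_l g_{l'} − S. -/
open MeasureTheory ProbabilityTheory Filter

open Classical in
lemma aux_hasSum {I : Type*} (d : ℕ → I) (hd : Function.Injective d)
    (n : ℕ) (f : I → ℝ) :
    HasSum (fun p : I × I => if p.1 = p.2 ∧ ∃ k ∈ Finset.Icc 1 n, d k = p.1 then f p.1 else 0)
      (∑ k ∈ Finset.Icc 1 n, f (d k)) := by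
  have h := hasSum_sum_of_ne_finset_zero (L := SummationFilter.unconditional _)
    (f := fun p : I × I => if p.1 = p.2 ∧ ∃ k ∈ Finset.Icc 1 n, d k = p.1 then f p.1 else 0)
    (s := (Finset.Icc 1 n).image (fun k => (d k, d k))) (by
      rintro ⟨a, b⟩ hab
      rw [if_neg]
      rintro ⟨h1, k, hk, h2⟩
      apply hab
      simp only at h1 h2
      subst h1 h2
      exact Finset.mem_image_of_mem _ hk)
  rw [Finset.sum_image (fun a _ b _ hab => hd (congrArg Prod.fst hab))] at h
  convert h using 1
  apply Finset.sum_congr rfl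
  intro k hk
  rw [if_pos ⟨rfl, k, hk, rfl⟩]

open Classical in
lemma aux_hasSum_diag {I : Type*} (d : ℕ → I) (hd : Function.Injective d)
    (n : ℕ) (f : I → ℝ) :
    HasSum (fun l : I => if ∃ k ∈ Finset.Icc 1 n, d k = l then f l else 0)
      (∑ k ∈ Finset.Icc 1 n, f (d k)) := by
  have h := hasSum_sum_of_ne_finset_zero (L := SummationFilter.unconditional _)
    (f := fun l : I => if ∃ k ∈ Finset.Icc 1 n, d k = l then f l else 0)
    (s := (Finset.Icc 1 n).image d) (by
      rintro a ha
      rw [if_neg]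
      rintro ⟨k, hk, h2⟩
      subst h2
      exact ha (Finset.mem_image_of_mem _ hk))
  rw [Finset.sum_image (fun a _ b _ hab => hd hab)] at h
  convert h using 1
  apply Finset.sum_congr rfl
  intro k hk
  rw [if_pos ⟨k, hk, rfl⟩]

section
variable {I : Type*} {Ω : Type*} [MeasurableSpace Ω]
    (P : Measure Ω) [IsProbabilityMeasure P]
    (g : I → Ω → ℝ) (v : I → NNReal)

lemma aux_law (hmeas : ∀ l, Measurable (g l)) (hv : ∀ l, 0 < v l)
    (hlaw : ∀ l, P.map (g l) = gaussianReal 0 (v l)) (l : I) :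
    P.map (fun ω => g l ω / Real.sqrt (v l)) = gaussianReal 0 1 := by
  have h1 : HasLaw (g l) (gaussianReal 0 (v l)) P := ⟨(hmeas l).aemeasurable, hlaw l⟩
  have h2 := (gaussianReal_div_const h1 (Real.sqrt (v l))).map_eq
  rw [h2]
  congr 1
  · simp
  · ext
    have : (v l : ℝ) ≠ 0 := by exact_mod_cast (hv l).ne'
    simp [this]

lemma aux_memLp (hmeas : ∀ l, Measurable (g l)) (hv : ∀ l, 0 < v l)
    (hlaw : ∀ l, P.map (g l) = gaussianReal 0 (v l)) (l : I) (p : NNReal) :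
    MemLp (fun ω => g l ω / Real.sqrt (v l)) p P := by
  have h := memLp_id_gaussianReal (μ := 0) (v := 1) p
  rw [← aux_law P g v hmeas hv hlaw l] at h
  exact h.comp_of_map ((hmeas l).div_const _).aemeasurable

lemma aux_integral (hmeas : ∀ l, Measurable (g l)) (hv : ∀ l, 0 < v l)
    (hlaw : ∀ l, P.map (g l) = gaussianReal 0 (v l)) (l : I) :
    ∫ ω, (g l ω / Real.sqrt (v l)) ^ 2 ∂P = 1 := by
  have h := variance_eq_integral (μ := gaussianReal 0 1) (X := id) aemeasurable_id
  rw [variance_id_gaussianReal] at h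
  simp only [id, integral_id_gaussianReal, sub_zero] at h
  rw [← aux_law P g v hmeas hv hlaw l, integral_map ((hmeas l).div_const _).aemeasurable
    (by fun_prop)] at h
  simpa using h.symm

lemma aux_summable [Countable I] (hmeas : ∀ l, Measurable (g l)) (hv : ∀ l, 0 < v l)
    (hlaw : ∀ l, P.map (g l) = gaussianReal 0 (v l)) (H : I → I → ℝ)
    (habs : Summable fun p : I × I => |H p.1 p.2| * Real.sqrt (v p.1) * Real.sqrt (v p.2)) :
    ∀ᵐ ω ∂P, Summable fun p : I × I => H p.1 p.2 * g p.1 ω * g p.2 ω := by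
  set c : I × I → ℝ := fun p => |H p.1 p.2| * Real.sqrt (v p.1) * Real.sqrt (v p.2) with hc
  have hc0 : ∀ p, 0 ≤ c p := fun p => by positivity
  have hint : ∀ l, Integrable (fun ω => (g l ω / Real.sqrt (v l)) ^ 2) P := fun l =>
    (aux_memLp P g v hmeas hv hlaw l 2).integrable_sq
  have hb : ∀ p : I × I, ∫⁻ ω, ‖H p.1 p.2 * g p.1 ω * g p.2 ω‖ₑ ∂P ≤ ENNReal.ofReal (c p) := by
    intro p
    calc ∫⁻ ω, ‖H p.1 p.2 * g p.1 ω * g p.2 ω‖ₑ ∂P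
        ≤ ∫⁻ ω, ENNReal.ofReal (c p * (((g p.1 ω / Real.sqrt (v p.1)) ^ 2
            + (g p.2 ω / Real.sqrt (v p.2)) ^ 2) / 2)) ∂P := by
          apply lintegral_mono
          intro ω
          simp only
          rw [Real.enorm_eq_ofReal_abs]
          apply ENNReal.ofReal_le_ofReal
          have h1 : 0 < Real.sqrt (v p.1) := Real.sqrt_pos.2 (by exact_mod_cast hv _)
          have h2 : 0 < Real.sqrt (v p.2) := Real.sqrt_pos.2 (by exact_mod_cast hv _)
          have e : |H p.1 p.2 * g p.1 ω * g p.2 ω| =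
              c p * (|g p.1 ω / Real.sqrt (v p.1)| * |g p.2 ω / Real.sqrt (v p.2)|) := by
            rw [abs_mul, abs_mul, abs_div, abs_div, abs_of_pos h1, abs_of_pos h2, hc]
            field_simp
          rw [e]
          apply mul_le_mul_of_nonneg_left _ (hc0 p)
          rw [← sq_abs (g p.1 ω / _), ← sq_abs (g p.2 ω / _)]
          nlinarith [sq_nonneg (|g p.1 ω / Real.sqrt (v p.1)| - |g p.2 ω / Real.sqrt (v p.2)|)]
      _ = ENNReal.ofReal (c p) := by
          rw [← ofReal_integral_eq_lintegral_ofReal]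
          · rw [integral_const_mul, integral_div, integral_add (hint _) (hint _),
              aux_integral P g v hmeas hv hlaw, aux_integral P g v hmeas hv hlaw]
            norm_num
          · exact (((hint _).add (hint _)).div_const 2).const_mul _
          · exact ae_of_all _ fun ω => mul_nonneg (hc0 p) (by positivity)
  have hm : ∀ p : I × I, Measurable fun ω => ‖H p.1 p.2 * g p.1 ω * g p.2 ω‖ₑ := fun p =>
    (((hmeas p.1).const_mul _).mul (hmeas p.2)).enorm
  have hfin : ∫⁻ ω, ∑' p : I × I, ‖H p.1 p.2 * g p.1 ω * g p.2 ω‖ₑ ∂P ≠ ⊤ := by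
    rw [lintegral_tsum fun p => (hm p).aemeasurable]
    exact ne_top_of_le_ne_top habs.tsum_ofReal_ne_top (ENNReal.tsum_le_tsum hb)
  filter_upwards [ae_lt_top (Measurable.tsum hm) hfin] with ω hω
  have h3 := ENNReal.tsum_coe_ne_top_iff_summable.1 (show (∑' p : I × I,
    ((‖H p.1 p.2 * g p.1 ω * g p.2 ω‖₊ : NNReal) : ENNReal)) ≠ ⊤ from hω.ne)
  exact Summable.of_nnnorm h3

end

/-- **Renormalized limit identity (relation between `⋄` and `⊗`).** Let `(g_l)_{l∈I}` be a
countable family of independent centered real Gaussian random variables with variances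
`σ_l² = v l ∈ (0,∞)`, `(d_n)_{n≥1}` an injective sequence in `I`, and `H` symmetric with
`∑_{l,l'} |H_{l,l'}| σ_l σ_{l'} < ∞`, `S = ∑_l H_{l,l} σ_l²`. With
`Hⁿ_{l,l'} = H_{l,l'} − S/(n σ_{d_k}²)` if `l = l' = d_k` for some `1 ≤ k ≤ n` and
`Hⁿ_{l,l'} = H_{l,l'}` otherwise, one has (a) `∑_l Hⁿ_{l,l} σ_l² = 0`;
(b) `∑_{l,l'} (Hⁿ_{l,l'} − H_{l,l'})² σ_l² σ_{l'}² = S²/n → 0`; and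
(c) `Xₙ = ∑_{l,l'} Hⁿ_{l,l'} g_l g_{l'} → ∑_{l,l'} H_{l,l'} g_l g_{l'} − S` in `L²(P)`. -/
theorem renormalized_limit_identity
    {I : Type*} [Countable I] [DecidableEq I] {Ω : Type*} [MeasurableSpace Ω]
    (P : Measure Ω) [IsProbabilityMeasure P]
    (g : I → Ω → ℝ) (v : I → NNReal)
    (hmeas : ∀ l, Measurable (g l))
    (hv : ∀ l, 0 < v l)
    (hlaw : ∀ l, P.map (g l) = gaussianReal 0 (v l))
    (hindep : iIndepFun g P)
    (d : ℕ → I) (hd : Function.Injective d)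
    (H : I → I → ℝ) (hsymm : ∀ l l', H l l' = H l' l)
    (habs : Summable fun p : I × I => |H p.1 p.2| * Real.sqrt (v p.1) * Real.sqrt (v p.2))
    (S : ℝ) (hS : S = ∑' l, H l l * (v l : ℝ))
    (Hn : ℕ → I → I → ℝ)
    (hHn : ∀ n l l', Hn n l l' =
      H l l' - if l = l' ∧ ∃ k ∈ Finset.Icc 1 n, d k = l
        then S / ((n : ℝ) * (v l : ℝ)) else 0) :
    (∀ n : ℕ, 1 ≤ n → ∑' l, Hn n l l * (v l : ℝ) = 0) ∧
    (∀ n : ℕ, 1 ≤ n →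
      ∑' p : I × I, (Hn n p.1 p.2 - H p.1 p.2)^2 * (v p.1 : ℝ) * (v p.2 : ℝ) = S^2 / n) ∧
    Tendsto
      (fun n => ∑' p : I × I, (Hn n p.1 p.2 - H p.1 p.2)^2 * (v p.1 : ℝ) * (v p.2 : ℝ))
      atTop (nhds 0) ∧
    Tendsto (fun n => eLpNorm
        (fun ω => (∑' p : I × I, Hn n p.1 p.2 * g p.1 ω * g p.2 ω)
          - ((∑' p : I × I, H p.1 p.2 * g p.1 ω * g p.2 ω) - S)) 2 P)
      atTop (nhds 0) := by
  have hv0 : ∀ l, (v l : ℝ) ≠ 0 := fun l => by exact_mod_cast (hv l).ne'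
  have hb : ∀ n : ℕ, 1 ≤ n →
      ∑' p : I × I, (Hn n p.1 p.2 - H p.1 p.2)^2 * (v p.1 : ℝ) * (v p.2 : ℝ) = S^2 / n := by
    intro n hn
    have hn0 : (n : ℝ) ≠ 0 := by positivity
    have h := aux_hasSum d hd n (fun l => (S / ((n : ℝ) * (v l : ℝ))) ^ 2 * (v l : ℝ) * (v l : ℝ))
    have e : (∑ k ∈ Finset.Icc 1 n,
        (S / ((n : ℝ) * (v (d k) : ℝ))) ^ 2 * (v (d k) : ℝ) * (v (d k) : ℝ)) = S ^ 2 / n := by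
      rw [Finset.sum_congr rfl (g := fun _ => S ^ 2 / (n : ℝ) ^ 2)]
      · simp
        field_simp
      · intro k _
        have := hv0 (d k)
        field_simp
    rw [← e, ← h.tsum_eq]
    apply tsum_congr
    rintro ⟨a, b⟩
    simp only [hHn]
    split_ifs with hab
    · rw [← hab.1]; ring
    · ring
  refine ⟨?_, hb, ?_, ?_⟩
  · intro n hn
    have hn0 : (n : ℝ) ≠ 0 := by positivity
    have hs : Summable fun l => H l l * (v l : ℝ) := by
      have h := habs.comp_injective (i := fun l : I => (l, l))
        (fun a b hab => congrArg Prod.fst hab)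
      apply Summable.of_norm
      refine h.congr fun l => ?_
      simp only [Function.comp, Real.norm_eq_abs, abs_mul, NNReal.abs_eq, mul_assoc]
      rw [Real.mul_self_sqrt (NNReal.coe_nonneg _)]
    have h := aux_hasSum_diag d hd n (fun l => (S / ((n : ℝ) * (v l : ℝ))) * (v l : ℝ))
    have e : (∑ k ∈ Finset.Icc 1 n, (S / ((n : ℝ) * (v (d k) : ℝ))) * (v (d k) : ℝ)) = S := by
      rw [Finset.sum_congr rfl (g := fun _ => S / (n : ℝ))]
      · simp
        field_simp
      · intro k _
        have := hv0 (d k)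
        field_simp
    rw [e] at h
    have h2 := hs.hasSum.sub h
    rw [← hS, sub_self] at h2
    rw [← h2.tsum_eq]
    apply tsum_congr
    intro l
    simp only [hHn, true_and]
    split_ifs <;> ring
  · have h : Tendsto (fun n : ℕ => S ^ 2 / (n : ℝ)) atTop (nhds 0) :=
      tendsto_const_div_atTop_nhds_zero_nat _
    refine h.congr' ?_
    filter_upwards [eventually_ge_atTop 1] with n hn
    exact (hb n hn).symm
  · set X : ℕ → Ω → ℝ := fun i ω => (g (d (i + 1)) ω / Real.sqrt (v (d (i + 1)))) ^ 2 with hX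
    have hmX : ∀ i, Measurable (X i) := fun i => ((hmeas _).div_const _).pow_const 2
    have hlp : MemLp (X 0) 2 P := by
      have h4 := aux_memLp P g v hmeas hv hlaw (d (0 + 1)) 4
      have h5 := h4.norm_rpow_div 2
      have e42 : ((4 : NNReal) : ENNReal) / 2 = 2 := by
        rw [show ((4 : NNReal) : ENNReal) = 2 * 2 by norm_num]
        exact ENNReal.mul_div_cancel_right (by norm_num) (by norm_num)
      rw [e42] at h5
      refine h5.congr_norm (hmX 0).aestronglyMeasurable (ae_of_all _ fun ω => ?_)
      simp [hX]
    have hpair : Pairwise (Function.onFun (fun f h : Ω → ℝ => f ⟂ᵢ[P] h) X) := by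
      intro i j hij
      have h := hindep.indepFun (i := d (i + 1)) (j := d (j + 1)) (fun h => hij (by
        have := hd h
        omega))
      exact h.comp (φ := fun x => (x / Real.sqrt (v (d (i + 1)))) ^ 2)
        (ψ := fun x => (x / Real.sqrt (v (d (j + 1)))) ^ 2) (by fun_prop) (by fun_prop)
    have hident : ∀ i, IdentDistrib (X i) (X 0) P P := by
      intro i
      have h : IdentDistrib (fun ω => g (d (i + 1)) ω / Real.sqrt (v (d (i + 1))))
          (fun ω => g (d (0 + 1)) ω / Real.sqrt (v (d (0 + 1)))) P P :=
        ⟨((hmeas _).div_const _).aemeasurable, ((hmeas _).div_const _).aemeasurable, by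
          rw [aux_law P g v hmeas hv hlaw, aux_law P g v hmeas hv hlaw]⟩
      exact h.comp (u := fun x => x ^ 2) (by fun_prop)
    have hlln := strong_law_Lp (p := 2) (by norm_num) (by norm_num) X hlp hpair hident
    have hX0 : ∫ ω, X 0 ω ∂P = 1 := aux_integral P g v hmeas hv hlaw _
    rw [hX0] at hlln
    have hlln2 := ENNReal.Tendsto.const_mul (a := ‖S‖ₑ) hlln (Or.inr enorm_ne_top)
    rw [mul_zero] at hlln2
    refine hlln2.congr' ?_
    filter_upwards [eventually_ge_atTop 1] with n hn
    have hn0 : (n : ℝ) ≠ 0 := by positivity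
    rw [← eLpNorm_const_smul]
    rw [← eLpNorm_neg]
    apply eLpNorm_congr_ae
    filter_upwards [aux_summable P g v hmeas hv hlaw H habs] with ω hω
    have h := aux_hasSum d hd n (fun l => (S / ((n : ℝ) * (v l : ℝ))) * g l ω * g l ω)
    have h2 := hω.hasSum.sub h
    have e : (∑' p : I × I, Hn n p.1 p.2 * g p.1 ω * g p.2 ω) =
        (∑' p : I × I, H p.1 p.2 * g p.1 ω * g p.2 ω) -
        ∑ k ∈ Finset.Icc 1 n, (S / ((n : ℝ) * (v (d k) : ℝ))) * g (d k) ω * g (d k) ω := by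
      rw [← h2.tsum_eq]
      apply tsum_congr
      rintro ⟨a, b⟩
      simp only [hHn]
      split_ifs with hab
      · rw [← hab.1]; ring
      · ring
    have e2 : ∑ k ∈ Finset.Icc 1 n, (S / ((n : ℝ) * (v (d k) : ℝ))) * g (d k) ω * g (d k) ω
        = S * ((n : ℝ)⁻¹ * ∑ i ∈ Finset.range n, X i ω) := by
      rw [Finset.mul_sum, Finset.mul_sum, Finset.range_eq_Ico,
        Finset.sum_Ico_add' (fun k => S * ((n : ℝ)⁻¹ * (g (d k) ω / Real.sqrt (v (d k))) ^ 2))]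
      apply Finset.sum_congr
      · ext; simp <;> omega
      · intro k _
        rw [div_pow, Real.sq_sqrt (NNReal.coe_nonneg _)]
        have := hv0 (d k)
        field_simp
    rw [e, e2]
    simp only [Pi.neg_apply, Pi.smul_apply, smul_eq_mul]
    ring
end
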